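/- arXiv:1910.09825 — 6 statements merged into one kernel-verified Lean document; each statement's English description precedes it below -/
import Mathlib

section
/- Let q be a prime power with q ≡ 3 (mod 4) and q ≥ 19. Then there exists a maximally nonassociative quasigroup of order q, i.e. a quasigroup operation on a set of cardinality q whose number of associative triples equals q. -/
/-- A quasigroup that is idempotent and whose only associative triples are the diagonal ones. -/
def MNQ (Q : Type) (m : Q → Q → Q) : Prop :=
  (∀ a b : Q, (∃! x, m a x = b) ∧ (∃! y, m y a = b)) ∧ (∀ x, m x x = x) ∧
    ∀ x y z, m (m x y) z = m x (m y z) → x = y ∧ y = z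

/-- There is such a quasigroup of order `n`. -/
def HasM (n : ℕ) : Prop := ∃ (Q : Type) (m : Q → Q → Q), Finite Q ∧ Nat.card Q = n ∧ MNQ Q m

theorem MNQ.count {Q : Type} {m : Q → Q → Q} (h : MNQ Q m) :
    Nat.card {t : Q × Q × Q // m (m t.1 t.2.1) t.2.2 = m t.1 (m t.2.1 t.2.2)} = Nat.card Q := by
  refine Nat.card_congr
    { toFun := fun t => t.1.1
      invFun := fun x => ⟨(x, x, x), by simp [h.2.1]⟩
      left_inv := ?_
      right_inv := fun x => rfl }
  rintro ⟨⟨x, y, z⟩, ht⟩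
  obtain ⟨h1, h2⟩ := h.2.2 x y z ht
  subst h1; subst h2; rfl

theorem existsUnique_of_inj {Q : Type} [Finite Q] {g : Q → Q} (hg : Function.Injective g) (b : Q) :
    ∃! x, g x = b :=
  (Function.bijective_iff_existsUnique g).1 ⟨hg, Finite.surjective_of_injective hg⟩ b

theorem mnq_of_orth {G : Type} [AddCommGroup G] [Finite G] (f : G → G) (h0 : f 0 = 0)
    (hf : Function.Injective f) (hg : Function.Injective fun t => t - f t)
    (h : ∀ x z, f (f z - x) = f (-x) + f (z - x - f (-x)) → x = 0 ∧ z = 0) :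
    MNQ G (fun x y => x + f (y - x)) := by
  refine ⟨fun a b => ⟨existsUnique_of_inj ?_ b, existsUnique_of_inj ?_ b⟩, ?_, ?_⟩
  · intro x y hxy
    have := hf (add_left_cancel hxy)
    simpa using this
  · intro x y hxy
    simp only at hxy
    have : (a - x) - f (a - x) = (a - y) - f (a - y) := by
      have h2 : a - (x + f (a - x)) = a - (y + f (a - y)) := by rw [hxy]
      rw [← sub_sub, ← sub_sub] at h2; exact h2
    have := hg this
    simpa using this
  · intro x; simp [h0]
  · intro x y z hxyz
    simp only at hxyz
    have := h (x - y) (z - y) ?_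
    · exact ⟨sub_eq_zero.1 this.1, (sub_eq_zero.1 this.2).symm⟩
    · have e1 : f (z - y) - (x - y) = y + f (z - y) - x := by abel
      have e2 : -(x - y) = y - x := by abel
      have e3 : z - y - (x - y) - f (y - x) = z - (x + f (y - x)) := by abel
      rw [e2, e1, e3]
      rw [add_assoc] at hxyz
      exact (add_left_cancel hxyz).symm

theorem HasM.of_orth {G : Type} [AddCommGroup G] [Finite G] (f : G → G) (h0 : f 0 = 0)
    (hf : Function.Injective f) (hg : Function.Injective fun t => t - f t)
    (h : ∀ x z, f (f z - x) = f (-x) + f (z - x - f (-x)) → x = 0 ∧ z = 0) :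
    HasM (Nat.card G) :=
  ⟨G, _, inferInstance, rfl, mnq_of_orth f h0 hf hg h⟩

theorem HasM.one : HasM 1 :=
  ⟨Unit, fun _ _ => (), inferInstance, by simp,
    fun _ _ => ⟨⟨(), rfl, fun _ _ => rfl⟩, ⟨(), rfl, fun _ _ => rfl⟩⟩, fun _ => rfl,
    fun _ _ _ _ => ⟨rfl, rfl⟩⟩

theorem HasM.mul {n k : ℕ} (hn : HasM n) (hk : HasM k) : HasM (n * k) := by
  obtain ⟨Q, m, hQ, rfl, a1, a2, a3⟩ := hn
  obtain ⟨R, l, hR, rfl, b1, b2, b3⟩ := hk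
  refine ⟨Q × R, fun x y => (m x.1 y.1, l x.2 y.2), inferInstance, Nat.card_prod _ _,
    fun a b => ⟨existsUnique_of_inj ?_ b, existsUnique_of_inj ?_ b⟩, ?_, ?_⟩
  · intro x y hxy
    simp only [Prod.mk.injEq] at hxy
    exact Prod.ext ((a1 a.1 (m a.1 y.1)).1.unique hxy.1 rfl)
      ((b1 a.2 (l a.2 y.2)).1.unique hxy.2 rfl)
  · intro x y hxy
    simp only [Prod.mk.injEq] at hxy
    exact Prod.ext ((a1 a.1 (m y.1 a.1)).2.unique hxy.1 rfl)
      ((b1 a.2 (l y.2 a.2)).2.unique hxy.2 rfl)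
  · intro x; simp [a2, b2]
  · intro x y z hxyz
    simp only [Prod.mk.injEq] at hxyz
    have h1 := a3 _ _ _ hxyz.1
    have h2 := b3 _ _ _ hxyz.2
    exact ⟨Prod.ext h1.1 h2.1, Prod.ext h1.2 h2.2⟩

theorem HasM.pow {n : ℕ} (hn : HasM n) (j : ℕ) : HasM (n ^ j) := by
  induction j with
  | zero => simpa using HasM.one
  | succ j ih => rw [pow_succ]; exact ih.mul hn


/-- Side condition of the criterion, on the four signs. -/
def SideOK (V U P M : ℤ) : Prop :=
  U ≠ 0 ∧ ((P = 1 ∧ (M = -1 ∨ V = 1)) ∨ (P = -1 ∧ U = -1) ∨ (V = 1 ∧ U = -1) ∨ (M = -1 ∧ U = -1))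

/-- A `±1`-valued quadratic character with `χ (-1) = -1`. -/
structure IsQC {F : Type} [Field F] (χ : F → ℤ) : Prop where
  mul : ∀ x y, χ (x * y) = χ x * χ y
  zero : χ 0 = 0
  sgn : ∀ x, x ≠ 0 → χ x = 1 ∨ χ x = -1
  neg_one : χ (-1) = -1

namespace IsQC

variable {F : Type} [Field F] {χ : F → ℤ}

theorem neg (h : IsQC χ) (x : F) : χ (-x) = - χ x := by
  rw [← neg_one_mul, h.mul, h.neg_one]; ring

theorem ne_zero (h : IsQC χ) {x : F} (hx : χ x ≠ 0) : x ≠ 0 := by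
  rintro rfl; exact hx h.zero

theorem one (h : IsQC χ) : χ 1 = 1 := by
  have := h.neg (-1)
  rw [neg_neg, h.neg_one] at this; simpa using this

theorem mul_self (h : IsQC χ) {x : F} (hx : x ≠ 0) : χ (x * x) = 1 := by
  rw [h.mul]; rcases h.sgn x hx with h | h <;> rw [h] <;> rfl

/-- the two coefficients -/
def sg (b : Bool) : ℤ := if b then 1 else -1

theorem core (h : IsQC χ) [Finite F] (c : Bool → F)
    (hc : ∀ b, χ (c b) = -1) (hc1 : ∀ b, χ (1 - c b) = 1)
    (hT : ∀ b, χ (1 - 2 * c b + c b * c (!b)) = -1)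
    (hS : ∀ b, SideOK (χ (c b - c (!b) - c b * c (!b)))
      (χ (c (!b) * (1 - c b + c b ^ 2) - c b ^ 2)) (χ (c b ^ 2 - c (!b)))
      (χ (c (!b) ^ 2 - 2 * c (!b) + c b))) :
    HasM (Nat.card F) := by
  classical
  set f : F → F := fun t => c (decide (χ t = 1)) * t with hfdef
  have hχf : ∀ t, χ (f t) = - χ t := by
    intro t; simp only [hfdef]; rw [h.mul, hc]; ring
  have hχg : ∀ t, χ (t - f t) = χ t := by
    intro t; simp only [hfdef]
    rw [show t - c (decide (χ t = 1)) * t = (1 - c (decide (χ t = 1))) * t by ring, h.mul, hc1]; ring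
  have hcn : ∀ b, c b ≠ 0 := fun b => h.ne_zero (by rw [hc]; decide)
  have hcn1 : ∀ b, 1 - c b ≠ 0 := fun b => h.ne_zero (by rw [hc1]; decide)
  have hf : Function.Injective f := by
    intro t u htu
    have e : χ t = χ u := by
      have := hχf t; rw [htu, hχf u] at this; linarith
    simp only [hfdef, e] at htu
    exact mul_left_cancel₀ (hcn _) htu
  have hg : Function.Injective fun t => t - f t := by
    intro t u htu
    have e : χ t = χ u := by
      have := hχg t; simp only at htu; rw [htu, hχg u] at this; exact this.symm
    simp only [hfdef, e] at htu
    refine mul_left_cancel₀ (hcn1 (decide (χ u = 1))) ?_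
    linear_combination htu
  have hf0 : f 0 = 0 := by simp [hfdef]
  have hsg : ∀ t, t ≠ 0 → χ t = sg (decide (χ t = 1)) := by
    intro t ht
    rcases h.sgn t ht with e | e <;> rw [e] <;> rfl
  -- the values of the four expressions
  have hD : ∀ r j s : Bool, χ (c r * c j - c s) =
      if j = s ∨ r = s then 1 else χ (c r ^ 2 - c (!r)) := by
    intro r j s
    split_ifs with hh
    · rcases hh with rfl | rfl
      · rw [show c r * c j - c j = -(c j * (1 - c r)) by ring, h.neg, h.mul, hc, hc1]; rfl
      · rw [show c r * c j - c r = -(c r * (1 - c j)) by ring, h.neg, h.mul, hc, hc1]; rfl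
    · have e1 : j = r := by revert hh; revert r j s; decide
      have e2 : s = !r := by revert hh; revert r j s; decide
      rw [e1, e2, sq]
  have hN : ∀ r i s : Bool, χ (c r - c i - c s + c s * c i) =
      if r = i ∨ r = s then 1 else χ (c i ^ 2 - 2 * c i + c (!i)) := by
    intro r i s
    split_ifs with hh
    · rcases hh with rfl | rfl
      · rw [show c r - c r - c s + c s * c r = -(c s * (1 - c r)) by ring, h.neg, h.mul, hc, hc1]; rfl
      · rw [show c r - c i - c r + c r * c i = -(c i * (1 - c r)) by ring, h.neg, h.mul, hc, hc1]; rfl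
    · have e1 : s = i := by revert hh; revert r i s; decide
      have e2 : r = !i := by revert hh; revert r i s; decide
      rw [e1, e2]; congr 1; ring
  have hE : ∀ i j s : Bool, χ (c s * (1 - c j) - c j * c i * (1 - c s)) =
      if s = j then -1 else if i = j then χ (c (!j) * (1 - c j + c j ^ 2) - c j ^ 2) else 1 := by
    intro i j s
    split_ifs with h1 h2
    · subst h1
      rw [show c s * (1 - c s) - c s * c i * (1 - c s) = c s * (1 - c s) * (1 - c i) by ring,
        h.mul, h.mul, hc, hc1, hc1]; rfl
    · subst h2
      have e1 : s = !i := by revert h1; revert i s; decide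
      rw [e1]; congr 1; ring
    · have e1 : s = !j := by clear h2; revert h1; revert j s; decide
      have e2 : i = !j := by clear e1 h1; revert h2; revert j i; decide
      rw [e1, e2, show c (!j) * (1 - c j) - c j * c (!j) * (1 - c (!j))
        = c (!j) * (1 - 2 * c j + c j * c (!j)) by ring, h.mul, hc, hT]; rfl
  have hF1 : ∀ i j : Bool, χ (c i * (1 - c j + c i * c j) - c i) = -1 := by
    intro i j
    rw [show c i * (1 - c j + c i * c j) - c i = -(c i * c j * (1 - c i)) by ring, h.neg, h.mul,
      h.mul, hc, hc, hc1]; rfl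
  have hF2 : ∀ i j : Bool, i ≠ j → χ (c j * (1 - c j + c i * c j) - c i) =
      χ (c j - c (!j) - c j * c (!j)) := by
    intro i j hij
    have e2 : i = !j := by revert hij; revert j i; decide
    rw [e2, show c j * (1 - c j + c (!j) * c j) - c (!j) =
      (1 - c j) * (c j - c (!j) - c j * c (!j)) by ring, h.mul, hc1, one_mul]
  refine HasM.of_orth f hf0 hf hg ?_
  intro x z hxz
  by_cases hx : x = 0
  · subst hx
    simp only [sub_zero, neg_zero, hf0, zero_add] at hxz
    have h1 : f z = z := hf hxz
    refine ⟨rfl, hg ?_⟩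
    simp only [h1, hf0, sub_self]
  exfalso
  by_cases hz : z = 0
  · subst hz
    rw [hf0] at hxz
    simp only [zero_sub] at hxz
    have h1 : f (-x - f (-x)) = 0 := by linear_combination -hxz
    have h2 : -x - f (-x) = 0 := hf (h1.trans hf0.symm)
    have h3 : -x = 0 := hg (by simp only [h2, hf0, sub_zero])
    exact hx (neg_eq_zero.1 h3)
  by_cases hw : z - x - f (-x) = 0
  · rw [hw, hf0, add_zero] at hxz
    have h1 : f z - x = -x := hf hxz
    have h2 : f z = 0 := by linear_combination h1
    exact hz (hf (h2.trans hf0.symm))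
  have hi := hsg (-x) (neg_ne_zero.2 hx)
  have hj := hsg z hz
  have hs := hsg _ hw
  have fx : f (-x) = c (decide (χ (-x) = 1)) * (-x) := rfl
  have fz : f z = c (decide (χ z = 1)) * z := rfl
  have fs : f (z - x - f (-x)) = c (decide (χ (z - x - f (-x)) = 1)) * (z - x - f (-x)) := rfl
  have fr : f (f z - x) = c (decide (χ (f z - x) = 1)) * (f z - x) := rfl
  generalize decide (χ (-x) = 1) = i at hi fx
  generalize decide (χ z = 1) = j at hj fz
  generalize decide (χ (z - x - f (-x)) = 1) = s at hs fs
  rw [h.neg] at hi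
  by_cases hr0 : f z - x = 0
  · rw [hr0, hf0, fs, fx] at hxz
    rw [fz] at hr0
    have : z * (c s * (1 - c j) - c j * c i * (1 - c s)) = 0 := by
      linear_combination -hxz - (c s  + c i - c i * c s) * hr0
    have hE0 := hE i j s
    rw [(mul_eq_zero.1 this).resolve_left hz, h.zero] at hE0
    have := (hS j).1
    split_ifs at hE0 <;> omega
  have hr := hsg _ hr0
  generalize decide (χ (f z - x) = 1) = r at hr fr
  rw [fr, fs] at hxz
  rw [fz] at hr
  rw [fx] at hs
  rw [fx, fz] at hxz
  have k1 : z * (c r * c j - c s) = x * (c r - c i - c s + c s * c i) := by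
    linear_combination hxz
  have k2 : (c j * z - x) * (c r * c j - c s) =
      x * (c s * (1 - c j) - c j * c i * (1 - c s)) := by
    linear_combination c j * hxz
  have k3 : (z - x - c i * (-x)) * (c r * c j - c s) =
      x * (c r * (1 - c j + c i * c j) - c i) := by
    linear_combination hxz
  have m1 := congrArg χ k1
  have m2 := congrArg χ k2
  have m3 := congrArg χ k3
  rw [h.mul, h.mul x, hj, hD, hN] at m1
  rw [h.mul, h.mul x, hr, hD, hE] at m2
  rw [h.mul, h.mul x, hs, hD] at m3
  have hx' : χ x = - sg i := by linarith
  rw [hx'] at m1 m2 m3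
  have S1 := hS true
  have S2 := hS false
  have g1 := hF1 i j
  have g2 := hF2 i j
  clear hi hj hs hr hx' k1 k2 k3 hxz fr fs fz fx hF1 hF2 hE hN hD hS hsg hr0 hw
  simp only [SideOK] at S1 S2
  cases i <;> cases j <;> cases r <;> cases s <;>
    simp [sg] at m1 m2 m3 g1 g2 S1 S2 <;> (try simp only [g1] at m3) <;>
    (try simp only [g2] at m3) <;> omega

/-- The criterion in the parameters `t`, `K`. -/
def Crit {F : Type} [Field F] (χ : F → ℤ) (t K : F) : Prop :=
  χ t = -1 ∧ χ K = -1 ∧ χ (1 + t) = 1 ∧ χ (1 + K) = 1 ∧ χ (1 + t - K) = -1 ∧ χ (1 - t + K) = -1 ∧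
  SideOK (χ (t - K - K * t)) (χ (K + (K - t) * t)) (χ (t ^ 2 - 2 * K * t - K))
    (χ (t - 2 * K - K ^ 2)) ∧
  SideOK (χ (K - t - t * K)) (χ (t + (t - K) * K)) (χ (K ^ 2 - 2 * t * K - t))
    (χ (K - 2 * t - t ^ 2))

theorem hasM_of_crit (h : IsQC χ) [Finite F] {t K : F} (hc : Crit χ t K) : HasM (Nat.card F) := by
  obtain ⟨h1, h2, h3, h4, h5, h6, h7, h8⟩ := hc
  have n3 : 1 + t ≠ 0 := h.ne_zero (by rw [h3]; decide)
  have n4 : 1 + K ≠ 0 := h.ne_zero (by rw [h4]; decide)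
  set u := (1 + t)⁻¹ with hu
  set v := (1 + K)⁻¹ with hv
  have eu : (1 + t) * u = 1 := mul_inv_cancel₀ n3
  have ev : (1 + K) * v = 1 := mul_inv_cancel₀ n4
  have cu : χ u = 1 := by
    have := congrArg χ eu
    rwa [h.mul, h3, h.one, one_mul] at this
  have cv : χ v = 1 := by
    have := congrArg χ ev
    rwa [h.mul, h4, h.one, one_mul] at this
  have key : ∀ A B : F, A = B * u ∨ A = B * v ∨ A = B * u * v ∨ A = B * u * u * v ∨
      A = B * u * v * v → χ A = χ B := by
    rintro A B (e | e | e | e | e) <;> rw [e] <;> simp [h.mul, cu, cv]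
  have eu' : u = 1 - t * u := by linear_combination eu
  have ev' : v = 1 - K * v := by linear_combination ev
  refine h.core (fun b => if b then t * u else K * v) ?_ ?_ ?_ ?_ <;> rintro (_ | _) <;> simp only [Bool.not_true, Bool.not_false, if_true, if_false, Bool.false_eq_true]
  · rw [h.mul, h2, cv]; rfl
  · rw [h.mul, h1, cu]; rfl
  · rw [← ev', cv]
  · rw [← eu', cu]
  · rw [key _ (1 + t - K)]
    · exact h5
    · right; right; left
      rw [hu, hv]; field_simp; ring
  · rw [key _ (1 - t + K)]
    · exact h6
    · right; right; left
      rw [hu, hv]; field_simp; ring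
  · have : χ (K * v - t * u - K * v * (t * u)) = χ (K - t - t * K) := by
      apply key; right; right; left
      rw [hu, hv]; field_simp; ring
    rw [this]; clear this
    have : χ (t * u * (1 - K * v + (K * v) ^ 2) - (K * v) ^ 2) = χ (t + (t - K) * K) := by
      apply key; right; right; right; right
      rw [hu, hv]; field_simp; ring
    rw [this]; clear this
    have : χ ((K * v) ^ 2 - t * u) = χ (K ^ 2 - 2 * t * K - t) := by
      apply key; right; right; right; right
      rw [hu, hv]; field_simp; ring
    rw [this]; clear this
    have : χ ((t * u) ^ 2 - 2 * (t * u) + K * v) = χ (K - 2 * t - t ^ 2) := by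
      apply key; right; right; right; left
      rw [hu, hv]; field_simp; ring
    rw [this]; clear this
    exact h8
  · have : χ (t * u - K * v - t * u * (K * v)) = χ (t - K - K * t) := by
      apply key; right; right; left
      rw [hu, hv]; field_simp; ring
    rw [this]; clear this
    have : χ (K * v * (1 - t * u + (t * u) ^ 2) - (t * u) ^ 2) = χ (K + (K - t) * t) := by
      apply key; right; right; right; left
      rw [hu, hv]; field_simp; ring
    rw [this]; clear this
    have : χ ((t * u) ^ 2 - K * v) = χ (t ^ 2 - 2 * K * t - K) := by
      apply key; right; right; right; left
      rw [hu, hv]; field_simp; ring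
    rw [this]; clear this
    have : χ ((K * v) ^ 2 - 2 * (K * v) + t * u) = χ (t - 2 * K - K ^ 2) := by
      apply key; right; right; right; right
      rw [hu, hv]; field_simp; ring
    rw [this]; clear this
    exact h7

end IsQC


theorem isQC_quad (F : Type) [Field F] [Fintype F] [DecidableEq F]
    (hF : Fintype.card F % 4 = 3) : IsQC (fun x : F => quadraticChar F x) where
  mul x y := map_mul _ x y
  zero := MulChar.map_zero _
  sgn x hx := quadraticChar_dichotomy hx
  neg_one := by
    rw [quadraticChar_neg_one_iff_not_isSquare, FiniteField.isSquare_neg_one_iff]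
    simp [hF]

theorem IsQC.eq_one {F : Type} [Field F] {χ : F → ℤ} (h : IsQC χ) {x : F} (y : F) (hx : x ≠ 0)
    (e : x = y * y) : χ x = 1 := by
  subst e
  exact h.mul_self (fun h0 => hx (by simp [h0]))

theorem IsQC.eq_neg_one {F : Type} [Field F] {χ : F → ℤ} (h : IsQC χ) {x : F} (y : F) (hx : x ≠ 0)
    (e : -x = y * y) : χ x = -1 := by
  have := h.eq_one y (neg_ne_zero.2 hx) e
  rw [h.neg] at this; omega

/-- Multiplication by `a + b i` or `c + d i` depending on the quadratic character of the norm. -/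
def fsq (p : ℕ) (a b c d : ZMod p) (x : ZMod p × ZMod p) : ZMod p × ZMod p :=
  if (x.1 * x.1 + x.2 * x.2) ^ ((p - 1) / 2) = 1 then (a * x.1 - b * x.2, a * x.2 + b * x.1)
  else (c * x.1 - d * x.2, c * x.2 + d * x.1)

theorem hasM_9 : HasM 9 := by
  have := HasM.of_orth (G := ZMod 3 × ZMod 3) (fsq 3 0 1 0 2) (by decide +kernel)
    (by decide +kernel) (by decide +kernel) (by decide +kernel)
  simpa using this

theorem fsq_smul {p : ℕ} [Fact p.Prime] (hp : p % 2 = 1) (a b c d l : ZMod p) (hl : l ≠ 0)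
    (x : ZMod p × ZMod p) : fsq p a b c d (l • x) = l • fsq p a b c d x := by
  have e : l ^ (p - 1) = 1 := ZMod.pow_card_sub_one_eq_one hl
  have : ((l • x).1 * (l • x).1 + (l • x).2 * (l • x).2) ^ ((p - 1) / 2) =
      (x.1 * x.1 + x.2 * x.2) ^ ((p - 1) / 2) := by
    rw [show (l • x).1 * (l • x).1 + (l • x).2 * (l • x).2 = l ^ 2 * (x.1 * x.1 + x.2 * x.2) by
      simp only [Prod.smul_fst, Prod.smul_snd, smul_eq_mul]; ring, mul_pow, ← pow_mul,
      show 2 * ((p - 1) / 2) = p - 1 by omega, e, one_mul]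
  simp only [fsq, this]
  split_ifs <;> ext <;> simp <;> ring

theorem hasM_fsq {p : ℕ} [Fact p.Prime] (hp : p % 2 = 1) (a b c d : ZMod p)
    (g k : ZMod p × ZMod p → ZMod p × ZMod p) (hg : ∀ x, g (fsq p a b c d x) = x)
    (hk : ∀ x, k (x - fsq p a b c d x) = x)
    (h1 : ∀ y z, fsq p a b c d (fsq p a b c d z - (1, y)) ≠ fsq p a b c d (-(1, y)) +
      fsq p a b c d (z - (1, y) - fsq p a b c d (-(1, y))))
    (h2 : ∀ z, fsq p a b c d (fsq p a b c d z - (0, 1)) ≠ fsq p a b c d (-(0, 1)) +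
      fsq p a b c d (z - (0, 1) - fsq p a b c d (-(0, 1)))) : HasM (p * p) := by
  have f0 : fsq p a b c d 0 = 0 := by simp [fsq]
  have gi : Function.Injective (fsq p a b c d) := Function.LeftInverse.injective hg
  have ki : Function.Injective (fun x => x - fsq p a b c d x) :=
    Function.LeftInverse.injective (g := k) hk
  have := HasM.of_orth (G := ZMod p × ZMod p) (fsq p a b c d) f0 gi ki ?_
  · simpa using this
  have main : ∀ (l : ZMod p) (x z : ZMod p × ZMod p), l ≠ 0 →
      fsq p a b c d (fsq p a b c d z - x) = fsq p a b c d (-x) +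
      fsq p a b c d (z - x - fsq p a b c d (-x)) →
      fsq p a b c d (fsq p a b c d (l • z) - l • x) = fsq p a b c d (-(l • x)) +
      fsq p a b c d (l • z - l • x - fsq p a b c d (-(l • x))) := by
    intro l x z hl e
    rw [← smul_neg, fsq_smul hp _ _ _ _ _ hl, fsq_smul hp _ _ _ _ _ hl, ← smul_sub, ← smul_sub,
      ← smul_sub, fsq_smul hp _ _ _ _ _ hl, fsq_smul hp _ _ _ _ _ hl, e, smul_add]
  rintro ⟨u, v⟩ z e
  by_cases hu : u = 0
  · by_cases hv : v = 0
    · subst hu; subst hv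
      refine ⟨rfl, ?_⟩
      rw [show ((0, 0) : ZMod p × ZMod p) = 0 from rfl] at e
      simp only [sub_zero, neg_zero, f0, zero_add] at e
      have e1 := gi e
      exact ki (by simp only [e1, f0, sub_self])
    · have := main v⁻¹ _ _ (inv_ne_zero hv) e
      rw [show v⁻¹ • ((u, v) : ZMod p × ZMod p) = (0, 1) by ext <;> simp [hu, hv]] at this
      exact absurd this (h2 _)
  · have := main u⁻¹ _ _ (inv_ne_zero hu) e
    rw [show u⁻¹ • ((u, v) : ZMod p × ZMod p) = (1, u⁻¹ * v) by ext <;> simp [hu]] at this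
    exact absurd this (h1 _ _)

instance fact_prime_seven : Fact (Nat.Prime 7) := ⟨by norm_num⟩

instance fact_prime_eleven : Fact (Nat.Prime 11) := ⟨by norm_num⟩

theorem hasM_49 : HasM 49 :=
  hasM_fsq (p := 7) rfl 0 2 2 2 (fsq 7 0 3 2 5) (fsq 7 4 6 3 6) (by decide +kernel)
    (by decide +kernel) (by decide +kernel) (by decide +kernel)

theorem hasM_121 : HasM 121 :=
  hasM_fsq (p := 11) rfl 0 1 0 7 (fsq 11 0 10 0 3) (fsq 11 2 3 6 6) (by decide +kernel)
    (by decide +kernel) (by decide +kernel) (by decide +kernel)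


open Polynomial in
theorem cubic_field (p : ℕ) [Fact p.Prime] (A B : ℕ)
    (h : ∀ x : ZMod p, x ^ 3 - (A : ZMod p) * x - (B : ZMod p) ≠ 0) :
    ∃ (F : Type) (_ : Field F) (_ : Fintype F) (θ : F), Fintype.card F = p ^ 3 ∧ (p : F) = 0 ∧
      θ ^ 3 = A * θ + B := by
  set g : (ZMod p)[X] := X ^ 3 - C (A : ZMod p) * X - C (B : ZMod p) with hg
  have hdeg : g.natDegree = 3 := by rw [hg]; compute_degree!
  have hm : g.Monic := by rw [hg]; monicity!
  have hirr : Irreducible g := by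
    rw [irreducible_iff_roots_eq_zero_of_degree_le_three (by omega) (by omega)]
    rw [Multiset.eq_zero_iff_forall_notMem]
    intro x hx
    have := (mem_roots'.1 hx).2
    exact h x (by simpa [hg, IsRoot] using this)
  have : Fact (Irreducible g) := ⟨hirr⟩
  let pb := AdjoinRoot.powerBasis hirr.ne_zero
  have : Module.Finite (ZMod p) (AdjoinRoot g) := pb.finite
  have : Finite (AdjoinRoot g) := Module.finite_of_finite (ZMod p)
  let _ : Fintype (AdjoinRoot g) := Fintype.ofFinite _
  refine ⟨AdjoinRoot g, inferInstance, inferInstance, AdjoinRoot.root g, ?_, ?_, ?_⟩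
  · rw [Module.card_eq_pow_finrank (K := ZMod p), ZMod.card, pb.finrank, AdjoinRoot.powerBasis_dim,
      hdeg]
  · have := congrArg (algebraMap (ZMod p) (AdjoinRoot g)) (CharP.cast_eq_zero (ZMod p) p)
    rwa [map_natCast, map_zero] at this
  · have h0 : AdjoinRoot.mk g g = 0 := AdjoinRoot.mk_self
    have h1 : AdjoinRoot.mk g (X ^ 3 - C (A : ZMod p) * X - C (B : ZMod p)) =
        AdjoinRoot.root g ^ 3 - A * AdjoinRoot.root g - B := by
      simp [AdjoinRoot.mk_X]
    rw [← hg, h0] at h1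
    linear_combination -h1

theorem IsQC.cert_one {F : Type} [Field F] {χ : F → ℤ} (h : IsQC χ) (x y w : F)
    (e : x = y * y) (e1 : y * w = 1) : χ x = 1 := by
  subst e
  exact h.mul_self (left_ne_zero_of_mul_eq_one e1)

theorem IsQC.cert_neg {F : Type} [Field F] {χ : F → ℤ} (h : IsQC χ) (x y w : F)
    (e : x = -(y * y)) (e1 : y * w = 1) : χ x = -1 := by
  subst e
  rw [h.neg, h.mul_self (left_ne_zero_of_mul_eq_one e1)]


theorem hasM_27 : HasM 27 := by
  classical
  obtain ⟨F, _, _, θ, hcard, hp, hθ⟩ := cubic_field 3 1 1 (by decide)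
  obtain ⟨χ, h⟩ : ∃ χ : F → ℤ, IsQC χ := ⟨_, isQC_quad F (by rw [hcard]; rfl)⟩
  push_cast at hp hθ
  have hF : HasM (Nat.card F) := by
    obtain ⟨t, ht⟩ : ∃ t : F, t = θ + 2 * θ ^ 2 := ⟨_, rfl⟩
    obtain ⟨K, hK⟩ : ∃ K : F, K = 2 + 2 * θ + θ ^ 2 := ⟨_, rfl⟩
    have c0 := h.cert_neg (t) (1 + θ + θ ^ 2) (2 + 2 * θ ^ 2)
      (by rw [ht]; linear_combination (2 + θ) * hθ + (1 + 2 * θ + 2 * θ ^ 2) * hp)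
      (by linear_combination (2 + 2 * θ) * hθ + (1 + 2 * θ + 2 * θ ^ 2) * hp)
    have c1 := h.cert_neg (K) (1 + 2 * θ ^ 2) (2 * θ)
      (by rw [hK]; linear_combination (4 * θ) * hθ + (1 + 2 * θ + 3 * θ ^ 2) * hp)
      (by linear_combination (4) * hθ + (1 + 2 * θ) * hp)
    have c2 := h.cert_one (1 + t) (1 + 2 * θ ^ 2) (2 * θ)
      (by rw [ht]; linear_combination ((-4) * θ) * hθ + ((-1) * θ + (-2) * θ ^ 2) * hp)
      (by linear_combination (4) * hθ + (1 + 2 * θ) * hp)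
    have c3 := h.cert_one (1 + K) (1 + θ + θ ^ 2) (2 + 2 * θ ^ 2)
      (by rw [hK]; linear_combination ((-2) + (-1) * θ) * hθ + ((-1) * θ + (-1) * θ ^ 2) * hp)
      (by linear_combination (2 + 2 * θ) * hθ + (1 + 2 * θ + 2 * θ ^ 2) * hp)
    have c4 := h.cert_neg (1 + t - K) (1 + 2 * θ ^ 2) (2 * θ)
      (by rw [ht, hK]; linear_combination (4 * θ) * hθ + (θ + 3 * θ ^ 2) * hp)
      (by linear_combination (4) * hθ + (1 + 2 * θ) * hp)
    have c5 := h.cert_neg (1 - t + K) (1 + θ + θ ^ 2) (2 + 2 * θ ^ 2)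
      (by rw [ht, hK]; linear_combination (2 + θ) * hθ + (2 + 2 * θ + θ ^ 2) * hp)
      (by linear_combination (2 + 2 * θ) * hθ + (1 + 2 * θ + 2 * θ ^ 2) * hp)
    have c6 := h.cert_neg (t - K - K * t) (1 + 2 * θ) (2 * θ + 2 * θ ^ 2)
      (by rw [ht, hK]; linear_combination ((-5) + (-2) * θ) * hθ + ((-2) + (-2) * θ + (-1) * θ ^ 2) * hp)
      (by linear_combination (4) * hθ + (1 + 2 * θ + 2 * θ ^ 2) * hp)
    have c7 := h.cert_one (K + (K - t) * t) (θ) (2 + θ ^ 2)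
      (by rw [ht, hK]; linear_combination (1 + (-2) * θ) * hθ + (1 + θ + θ ^ 2) * hp)
      (by linear_combination (1) * hθ + (θ) * hp)
    have c8 := h.cert_one (t ^ 2 - 2 * K * t - K) (1) (1)
      (by rw [ht, hK]; linear_combination ((-6)) * hθ + ((-3) + (-4) * θ + (-4) * θ ^ 2) * hp)
      (by linear_combination (0) * hθ + (0) * hp)
    have c9 := h.cert_neg (t - 2 * K - K ^ 2) (1 + 2 * θ + 2 * θ ^ 2) (1 + 2 * θ + θ ^ 2)
      (by rw [ht, hK]; linear_combination (4 + 3 * θ) * hθ + ((-1) + θ ^ 2) * hp)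
      (by linear_combination (6 + 2 * θ) * hθ + (2 + 4 * θ + 3 * θ ^ 2) * hp)
    have c10 := h.cert_one (K - t - t * K) (1 + 2 * θ + 2 * θ ^ 2) (1 + 2 * θ + θ ^ 2)
      (by rw [ht, hK]; linear_combination ((-13) + (-6) * θ) * hθ + ((-4) + (-8) * θ + (-7) * θ ^ 2) * hp)
      (by linear_combination (6 + 2 * θ) * hθ + (2 + 4 * θ + 3 * θ ^ 2) * hp)
    have c11 := h.cert_one (t + (t - K) * K) (θ) (2 + θ ^ 2)
      (by rw [ht, hK]; linear_combination (1 + θ) * hθ + ((-1) + (-1) * θ) * hp)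
      (by linear_combination (1) * hθ + (θ) * hp)
    have c12 := h.cert_one (K ^ 2 - 2 * t * K - t) (1) (1)
      (by rw [ht, hK]; linear_combination ((-6) + (-3) * θ) * hθ + ((-1) + (-2) * θ + (-3) * θ ^ 2) * hp)
      (by linear_combination (0) * hθ + (0) * hp)
    have c13 := h.cert_one (K - 2 * t - t ^ 2) (1 + 2 * θ) (2 * θ + 2 * θ ^ 2)
      (by rw [ht, hK]; linear_combination ((-4) + (-4) * θ) * hθ + ((-1) + (-4) * θ + (-4) * θ ^ 2) * hp)
      (by linear_combination (4) * hθ + (1 + 2 * θ + 2 * θ ^ 2) * hp)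
    refine h.hasM_of_crit (t := t) (K := K) ⟨c0, c1, c2, c3, c4, c5, ?_, ?_⟩
    · rw [c6, c7, c8, c9]; unfold SideOK; decide
    · rw [c10, c11, c12, c13]; unfold SideOK; decide
  rw [Nat.card_eq_fintype_card, hcard] at hF
  exact hF


theorem hasM_343 : HasM 343 := by
  classical
  obtain ⟨F, _, _, θ, hcard, hp, hθ⟩ := cubic_field 7 0 2 (by decide)
  obtain ⟨χ, h⟩ : ∃ χ : F → ℤ, IsQC χ := ⟨_, isQC_quad F (by rw [hcard]; rfl)⟩
  push_cast at hp hθ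
  have hF : HasM (Nat.card F) := by
    obtain ⟨t, ht⟩ : ∃ t : F, t = 3 * θ ^ 2 := ⟨_, rfl⟩
    obtain ⟨K, hK⟩ : ∃ K : F, K = θ + 3 * θ ^ 2 := ⟨_, rfl⟩
    have c0 := h.cert_neg (t) (2 * θ) (2 * θ ^ 2)
      (by rw [ht]; linear_combination (0) * hθ + (θ ^ 2) * hp)
      (by linear_combination (4) * hθ + (1) * hp)
    have c1 := h.cert_neg (K) (2 + θ + 6 * θ ^ 2) (5 + 6 * θ ^ 2)
      (by rw [hK]; linear_combination (12 + 36 * θ) * hθ + (4 + 11 * θ + 4 * θ ^ 2) * hp)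
      (by linear_combination (6 + 36 * θ) * hθ + (3 + 11 * θ + 6 * θ ^ 2) * hp)
    have c2 := h.cert_one (1 + t) (3 + θ + 5 * θ ^ 2) (4 + θ)
      (by rw [ht]; linear_combination ((-10) + (-25) * θ) * hθ + ((-4) + (-8) * θ + (-4) * θ ^ 2) * hp)
      (by linear_combination (5) * hθ + (3 + θ + 3 * θ ^ 2) * hp)
    have c3 := h.cert_one (1 + K) (1 + 5 * θ ^ 2) (2 + 2 * θ + 4 * θ ^ 2)
      (by rw [hK]; linear_combination ((-25) * θ) * hθ + ((-7) * θ + (-1) * θ ^ 2) * hp)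
      (by linear_combination (10 + 20 * θ) * hθ + (3 + 6 * θ + 2 * θ ^ 2) * hp)
    have c4 := h.cert_neg (1 + t - K) (3 + θ + θ ^ 2) (6 * θ + 5 * θ ^ 2)
      (by rw [ht, hK]; linear_combination (2 + θ) * hθ + (2 + θ + θ ^ 2) * hp)
      (by linear_combination (11 + 5 * θ) * hθ + (3 + 4 * θ + 3 * θ ^ 2) * hp)
    have c5 := h.cert_neg (1 - t + K) (1 + θ + 3 * θ ^ 2) (1 + 5 * θ + 6 * θ ^ 2)
      (by rw [ht, hK]; linear_combination (6 + 9 * θ) * hθ + (2 + 3 * θ + θ ^ 2) * hp)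
      (by linear_combination (21 + 18 * θ) * hθ + (6 + 6 * θ + 2 * θ ^ 2) * hp)
    have c6 := h.cert_neg (t - K - K * t) (1 + 2 * θ + 5 * θ ^ 2) (1 + 3 * θ + 3 * θ ^ 2)
      (by rw [ht, hK]; linear_combination (17 + 16 * θ) * hθ + (5 + 5 * θ + 2 * θ ^ 2) * hp)
      (by linear_combination (21 + 15 * θ) * hθ + (6 + 5 * θ + 2 * θ ^ 2) * hp)
    have c7 := h.cert_one (K + (K - t) * t) (2 + θ + 4 * θ ^ 2) (3 + 2 * θ)
      (by rw [ht, hK]; linear_combination ((-5) + (-16) * θ) * hθ + ((-2) + (-5) * θ + (-2) * θ ^ 2) * hp)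
      (by linear_combination (8) * hθ + (3 + θ + 2 * θ ^ 2) * hp)
    have c8 := h.cert_one (t ^ 2 - 2 * K * t - K) (3 + 5 * θ) (4 + 5 * θ + θ ^ 2)
      (by rw [ht, hK]; linear_combination ((-6) + (-9) * θ) * hθ + ((-3) + (-7) * θ + (-4) * θ ^ 2) * hp)
      (by linear_combination (5) * hθ + (3 + 5 * θ + 4 * θ ^ 2) * hp)
    have c9 := h.cert_neg (t - 2 * K - K ^ 2) (2 + 4 * θ + 4 * θ ^ 2) (6 * θ + 2 * θ ^ 2)
      (by rw [ht, hK]; linear_combination (26 + 7 * θ) * hθ + (8 + 4 * θ + 4 * θ ^ 2) * hp)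
      (by linear_combination (32 + 8 * θ) * hθ + (9 + 4 * θ + 4 * θ ^ 2) * hp)
    have c10 := h.cert_neg (K - t - t * K) (1 + 4 * θ + 6 * θ ^ 2) (1 + 6 * θ + 5 * θ ^ 2)
      (by rw [ht, hK]; linear_combination (45 + 27 * θ) * hθ + (13 + 9 * θ + 4 * θ ^ 2) * hp)
      (by linear_combination (56 + 30 * θ) * hθ + (16 + 10 * θ + 5 * θ ^ 2) * hp)
    have c11 := h.cert_neg (t + (t - K) * K) (2 + 3 * θ + 6 * θ ^ 2) (1 + θ + 6 * θ ^ 2)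
      (by rw [ht, hK]; linear_combination (33 + 36 * θ) * hθ + (10 + 12 * θ + 5 * θ ^ 2) * hp)
      (by linear_combination (24 + 36 * θ) * hθ + (7 + 11 * θ + 3 * θ ^ 2) * hp)
    have c12 := h.cert_one (K ^ 2 - 2 * t * K - t) (3 + θ + 3 * θ ^ 2) (4 + 6 * θ + θ ^ 2)
      (by rw [ht, hK]; linear_combination ((-6) + (-18) * θ) * hθ + ((-3) + (-6) * θ + (-3) * θ ^ 2) * hp)
      (by linear_combination (19 + 3 * θ) * hθ + (7 + 4 * θ + 3 * θ ^ 2) * hp)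
    have c13 := h.cert_neg (K - 2 * t - t ^ 2) (1 + 3 * θ + 4 * θ ^ 2) (5 + θ + 5 * θ ^ 2)
      (by rw [ht, hK]; linear_combination (24 + 7 * θ) * hθ + (7 + 3 * θ + 2 * θ ^ 2) * hp)
      (by linear_combination (19 + 20 * θ) * hθ + (6 + 8 * θ + 4 * θ ^ 2) * hp)
    refine h.hasM_of_crit (t := t) (K := K) ⟨c0, c1, c2, c3, c4, c5, ?_, ?_⟩
    · rw [c6, c7, c8, c9]; unfold SideOK; decide
    · rw [c10, c11, c12, c13]; unfold SideOK; decide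
  rw [Nat.card_eq_fintype_card, hcard] at hF
  exact hF


theorem hasM_1331 : HasM 1331 := by
  classical
  obtain ⟨F, _, _, θ, hcard, hp, hθ⟩ := cubic_field 11 1 3 (by decide)
  obtain ⟨χ, h⟩ : ∃ χ : F → ℤ, IsQC χ := ⟨_, isQC_quad F (by rw [hcard]; rfl)⟩
  push_cast at hp hθ
  have hF : HasM (Nat.card F) := by
    obtain ⟨t, ht⟩ : ∃ t : F, t = 2 * θ ^ 2 := ⟨_, rfl⟩
    obtain ⟨K, hK⟩ : ∃ K : F, K = 4 * θ + 7 * θ ^ 2 := ⟨_, rfl⟩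
    have c0 := h.cert_neg (t) (3 * θ) (6 + 5 * θ ^ 2)
      (by rw [ht]; linear_combination (0) * hθ + (θ ^ 2) * hp)
      (by linear_combination (15) * hθ + (4 + 3 * θ) * hp)
    have c1 := h.cert_neg (K) (2 + 2 * θ + 7 * θ ^ 2) (1 + 9 * θ ^ 2)
      (by rw [hK]; linear_combination (28 + 49 * θ) * hθ + (8 + 17 * θ + 8 * θ ^ 2) * hp)
      (by linear_combination (18 + 63 * θ) * hθ + (5 + 19 * θ + 8 * θ ^ 2) * hp)
    have c2 := h.cert_one (1 + t) (4 + 5 * θ + 5 * θ ^ 2) (4 + 10 * θ ^ 2)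
      (by rw [ht]; linear_combination ((-50) + (-25) * θ) * hθ + ((-15) + (-15) * θ + (-8) * θ ^ 2) * hp)
      (by linear_combination (50 + 50 * θ) * hθ + (15 + 20 * θ + 10 * θ ^ 2) * hp)
    have c3 := h.cert_one (1 + K) (5 + 8 * θ + 5 * θ ^ 2) (4 + 2 * θ + 3 * θ ^ 2)
      (by rw [hK]; linear_combination ((-80) + (-25) * θ) * hθ + ((-24) + (-21) * θ + (-12) * θ ^ 2) * hp)
      (by linear_combination (34 + 15 * θ) * hθ + (11 + 11 * θ + 6 * θ ^ 2) * hp)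
    have c4 := h.cert_neg (1 + t - K) (4 + 7 * θ + 3 * θ ^ 2) (10 + 4 * θ + 9 * θ ^ 2)
      (by rw [ht, hK]; linear_combination (42 + 9 * θ) * hθ + (13 + 11 * θ + 7 * θ ^ 2) * hp)
      (by linear_combination (75 + 27 * θ) * hθ + (24 + 22 * θ + 11 * θ ^ 2) * hp)
    have c5 := h.cert_neg (1 - t + K) (1 + 5 * θ + 8 * θ ^ 2) (2 + 8 * θ ^ 2)
      (by rw [ht, hK]; linear_combination (80 + 64 * θ) * hθ + (22 + 26 * θ + 10 * θ ^ 2) * hp)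
      (by linear_combination (40 + 64 * θ) * hθ + (11 + 22 * θ + 8 * θ ^ 2) * hp)
    have c6 := h.cert_one (t - K - K * t) (3 + 9 * θ ^ 2) (7 + 7 * θ + 3 * θ ^ 2)
      (by rw [ht, hK]; linear_combination ((-8) + (-95) * θ) * hθ + ((-3) + (-27) * θ + (-14) * θ ^ 2) * hp)
      (by linear_combination (63 + 27 * θ) * hθ + (19 + 15 * θ + 9 * θ ^ 2) * hp)
    have c7 := h.cert_neg (K + (K - t) * t) (3 + 4 * θ) (8 + 9 * θ + 10 * θ ^ 2)
      (by rw [ht, hK]; linear_combination (8 + 10 * θ) * hθ + (3 + 6 * θ + 3 * θ ^ 2) * hp)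
      (by linear_combination (40) * hθ + (13 + 9 * θ + 6 * θ ^ 2) * hp)
    have c8 := h.cert_neg (t ^ 2 - 2 * K * t - K) (4 + 6 * θ + 7 * θ ^ 2) (4 + 10 * θ + 4 * θ ^ 2)
      (by rw [ht, hK]; linear_combination (68 + 25 * θ) * hθ + (20 + 17 * θ + 10 * θ ^ 2) * hp)
      (by linear_combination (94 + 28 * θ) * hθ + (27 + 22 * θ + 12 * θ ^ 2) * hp)
    have c9 := h.cert_one (t - 2 * K - K ^ 2) (3 + 9 * θ + θ ^ 2) (10 + 5 * θ)
      (by rw [ht, hK]; linear_combination ((-74) + (-50) * θ) * hθ + ((-21) + (-26) * θ + (-15) * θ ^ 2) * hp)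
      (by linear_combination (5) * hθ + (4 + 10 * θ + 5 * θ ^ 2) * hp)
    have c10 := h.cert_neg (K - t - t * K) (4 + 4 * θ + 4 * θ ^ 2) (2 * θ + 10 * θ ^ 2)
      (by rw [ht, hK]; linear_combination (24 + 2 * θ) * hθ + (8 + 6 * θ + 5 * θ ^ 2) * hp)
      (by linear_combination (48 + 40 * θ) * hθ + (13 + 16 * θ + 8 * θ ^ 2) * hp)
    have c11 := h.cert_neg (t + (t - K) * K) (5 + 7 * θ + θ ^ 2) (1 + 10 * θ + θ ^ 2)
      (by rw [ht, hK]; linear_combination ((-34) + (-34) * θ) * hθ + ((-7) + (-6) * θ + θ ^ 2) * hp)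
      (by linear_combination (17 + θ) * hθ + (5 + 7 * θ + 7 * θ ^ 2) * hp)
    have c12 := h.cert_neg (K ^ 2 - 2 * t * K - t) (3 + 2 * θ + 3 * θ ^ 2) (9 + 8 * θ + 2 * θ ^ 2)
      (by rw [ht, hK]; linear_combination (52 + 30 * θ) * hθ + (15 + 14 * θ + 6 * θ ^ 2) * hp)
      (by linear_combination (28 + 6 * θ) * hθ + (10 + 8 * θ + 5 * θ ^ 2) * hp)
    have c13 := h.cert_neg (K - 2 * t - t ^ 2) (4 + 7 * θ + 8 * θ ^ 2) (8 + 9 * θ + 5 * θ ^ 2)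
      (by rw [ht, hK]; linear_combination (112 + 60 * θ) * hθ + (32 + 32 * θ + 16 * θ ^ 2) * hp)
      (by linear_combination (107 + 40 * θ) * hθ + (32 + 29 * θ + 17 * θ ^ 2) * hp)
    refine h.hasM_of_crit (t := t) (K := K) ⟨c0, c1, c2, c3, c4, c5, ?_, ?_⟩
    · rw [c6, c7, c8, c9]; unfold SideOK; decide
    · rw [c10, c11, c12, c13]; unfold SideOK; decide
  rw [Nat.card_eq_fintype_card, hcard] at hF
  exact hF


/-- Decision tree on the quadratic characters of the small primes. -/
inductive Tr where
  | F : Tr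
  | X : Tr
  | L : ℤ → ℤ → ℤ → Tr
  | N : Tr → Tr → Tr

/-- Character of a natural number from the characters of its prime factors (`0` if unknown). -/
def sg1 : ℕ → List (ℕ × ℤ) → ℕ → ℤ
  | 0, _, _ => 0
  | _ + 1, [], n => if n = 1 then 1 else 0
  | k + 1, (q, e) :: l, n => if n % q = 0 then e * sg1 k ((q, e) :: l) (n / q) else sg1 k l n

def sgZ (l : List (ℕ × ℤ)) (n : ℤ) : ℤ :=
  if 0 ≤ n then sg1 100 l n.natAbs else - sg1 100 l n.natAbs

instance (V U P M : ℤ) : Decidable (SideOK V U P M) := by unfold SideOK; infer_instance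

def leafOK (l : List (ℕ × ℤ)) (x y z : ℤ) : Bool :=
  sgZ l x * sgZ l z = -1 && sgZ l y * sgZ l z = -1 && sgZ l (z + x) * sgZ l z = 1 &&
  sgZ l (z + y) * sgZ l z = 1 && sgZ l (z + x - y) * sgZ l z = -1 &&
  sgZ l (z - x + y) * sgZ l z = -1 &&
  decide (SideOK (sgZ l (x * z - y * z - x * y)) (sgZ l (y * z + (y - x) * x))
    (sgZ l (x * x - 2 * x * y - y * z)) (sgZ l (x * z - 2 * y * z - y * y))) &&
  decide (SideOK (sgZ l (y * z - x * z - x * y)) (sgZ l (x * z + (x - y) * y))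
    (sgZ l (y * y - 2 * x * y - x * z)) (sgZ l (y * z - 2 * x * z - x * x)))

def envF : List (ℕ × ℤ) := [(43, 1), (41, 1), (37, 1), (31, 1), (29, 1), (23, 1), (19, 1), (17, 1),
  (13, 1), (11, 1), (7, 1), (5, 1), (3, 1), (2, 1)]

def envX (e : ℤ) : List (ℕ × ℤ) := [(61, -1), (59, -1), (53, 1), (47, -1), (43, 1), (41, -1),
  (37, 1), (31, -1), (29, 1), (23, 1), (19, -1), (17, -1), (13, -1), (11, 1), (7, e), (5, -1),
  (3, -1), (2, 1)]

def treeOK : Tr → List (ℕ × ℤ) → List ℕ → Bool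
  | .F, l, _ => decide (l = envF)
  | .X, l, _ => decide (l = envX 1) || decide (l = envX (-1))
  | .L x y z, l, _ => leafOK l x y z
  | .N _ _, _, [] => false
  | .N a b, l, q :: ps => treeOK a ((q, 1) :: l) ps && treeOK b ((q, -1) :: l) ps

def bigTree : Tr :=
    .N (.N (.N (.N (.N (.N (.N (.N (.N (.N (.N (.N (.N (.N (.F) (.L (-1395) (-124) 492)) (.N (.N
    (.N (.N (.N (.L (-312) (-91) 189) (.L (-56) (-10) 15)) (.L 82 123 18)) (.L (-50) (-6) 9))
    (.L 82 123 6)) (.L (-75) (-25) 32))) (.L (-600) (-90) 119)) (.L (-475) (-175) 196)) (.N (.L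
    (-187) (-55) 100) (.L (-46) (-3) 15))) (.L (-240) (-20) 33)) (.N (.N (.N (.L (-217) (-35)
    65) (.L (-91) (-13) 15)) (.L (-12) (-7) 24)) (.L (-39) (-13) 20))) (.N (.L (-100) (-30) 49)
    (.N (.L (-77) (-35) 110) (.L (-9) (-6) 20)))) (.N (.L (-112) (-16) 21) (.N (.L (-49) (-7)
    10) (.L (-12) (-9) 16)))) (.N (.L (-54) (-9) 10) (.L (-9) (-8) 12))) (.N (.N (.N (.L (-20)
    (-5) 6) (.N (.L (-16) (-4) 9) (.L (-20) (-5) 6))) (.L 14 21 6)) (.L (-3) (-1) 9))) (.N (.N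
    (.L (-9) (-3) 4) (.N (.L (-9) (-3) 4) (.N (.L (-7) (-3) 9) (.L (-21) (-3) 4)))) (.N (.L (-4)
    (-3) 6) (.L (-8) (-6) 9)))) (.N (.N (.N (.L (-5) (-1) 2) (.N (.N (.L (-4) 6 1) (.L (-18) 3
    1)) (.N (.L (-4) 6 1) (.L (-14) (-5) 2)))) (.N (.N (.N (.N (.L (-19) (-11) 4) (.L (-44)
    (-17) 11)) (.L (-4) 6 5)) (.L (-16) (-4) 1)) (.L (-12) (-11) 3))) (.N (.N (.N (.L 3 12 1)
    (.N (.N (.L (-7) 13 4) (.L 3 21 1)) (.N (.L (-21) (-5) 3) (.N (.N (.N (.L 12 27 4) (.N (.N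
    (.L 26 35 15) (.N (.N (.L 35 45 2) (.N (.N (.L (-38) 15 6) (.N (.L 41 287 2) (.X))) (.L
    (-53) (-12) 3))) (.L (-51) (-7) 8))) (.L (-11) 55 8))) (.L 3 21 11)) (.L 13 23 2))))) (.N
    (.L 3 12 1) (.N (.L (-4) 6 1) (.L (-21) (-13) 24)))) (.N (.N (.N (.N (.N (.L (-20) (-12) 3)
    (.L 3 12 1)) (.L (-2) 6 11)) (.L (-4) 12 1)) (.N (.N (.L 6 10 9) (.L (-2) 6 11)) (.N (.L
    (-7) 9 3) (.N (.N (.N (.L (-34) 2 3) (.N (.N (.L (-39) 26 15) (.N (.N (.L 45 63 2) (.N (.N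
    (.L (-21) 55 4) (.N (.L (-14) 295 10) (.X))) (.L (-4) 48 1))) (.L (-111) 84 20))) (.L (-39)
    (-21) 2))) (.L (-52) 16 13)) (.L (-28) 11 12))))) (.N (.L (-13) (-9) 2) (.L (-11) (-5)
    3)))))) (.N (.N (.N (.L (-3) (-1) 4) (.N (.N (.L (-3) 2 1) (.N (.L (-16) 13 3) (.L (-11) 7
    4))) (.N (.L (-3) 2 1) (.N (.L (-16) 13 3) (.N (.L (-3) 2 1) (.N (.L (-77) (-56) 78) (.L
    (-36) (-27) 4))))))) (.N (.L (-4) (-3) 7) (.L (-3) (-1) 4))) (.N (.L (-4) 3 1) (.L (-3) 1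
    2)))

def primeList : List ℕ := [2, 3, 5, 7, 11, 13, 17, 19, 23, 29, 31, 37, 41, 43, 47, 53, 59, 61]

theorem bigTree_ok : treeOK bigTree [] primeList = true := by decide +kernel

namespace IsQC

variable {F : Type} [Field F] {χ : F → ℤ}

/-- The list of characters is correct. -/
def Valid (χ : F → ℤ) (l : List (ℕ × ℤ)) : Prop := ∀ a ∈ l, χ ((a.1 : ℕ) : F) = a.2

theorem sg1_eq (h : IsQC χ) (k : ℕ) (l : List (ℕ × ℤ)) (n : ℕ) (hl : Valid χ l)
    (hn : sg1 k l n ≠ 0) : χ (n : F) = sg1 k l n := by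
  induction k generalizing l n with
  | zero => simp [sg1] at hn
  | succ k ih =>
    cases l with
    | nil =>
      by_cases h1 : n = 1
      · subst h1; simp [sg1, h.one]
      · simp [sg1, h1] at hn
    | cons a l =>
      obtain ⟨q, e⟩ := a
      by_cases h1 : n % q = 0
      · simp only [sg1, h1, if_true] at hn ⊢
        rw [← ih _ _ hl (right_ne_zero_of_mul hn)]
        have hq : χ ((q : ℕ) : F) = e := hl (q, e) (by simp)
        rw [← hq, ← h.mul, ← Nat.cast_mul, Nat.mul_div_cancel' (Nat.dvd_of_mod_eq_zero h1)]
      · simp only [sg1, h1, if_false] at hn ⊢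
        exact ih _ _ (fun a ha => hl a (by simp [ha])) hn

theorem sgZ_eq (h : IsQC χ) (l : List (ℕ × ℤ)) (n : ℤ) (hl : Valid χ l)
    (hn : sgZ l n ≠ 0) : χ (n : F) = sgZ l n := by
  unfold sgZ at hn ⊢
  split_ifs at hn ⊢ with h0
  · rw [← h.sg1_eq _ _ _ hl hn]
    congr 1
    have : ((n.natAbs : ℤ) : F) = n := by rw [Int.natAbs_of_nonneg h0]
    simpa using this.symm
  · rw [← h.sg1_eq _ _ _ hl (by simpa using hn), ← h.neg]
    congr 1
    have : ((n.natAbs : ℤ) : F) = -n := by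
      rw [Int.ofNat_natAbs_of_nonpos (by omega)]; simp
    rw [Int.cast_natCast] at this
    rw [this, neg_neg]

theorem side_mono {V U P M V' U' P' M' : ℤ} (hs : SideOK V U P M) (hV : V ≠ 0 → V' = V)
    (hU : U ≠ 0 → U' = U) (hP : P ≠ 0 → P' = P) (hM : M ≠ 0 → M' = M) : SideOK V' U' P' M' := by
  unfold SideOK at *
  omega

theorem crit_of_leaf (h : IsQC χ) (l : List (ℕ × ℤ)) (hl : Valid χ l) (x y z : ℤ)
    (hx : leafOK l x y z = true) : ∃ t K, Crit χ t K := by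
  simp only [leafOK, Bool.and_eq_true, decide_eq_true_eq] at hx
  obtain ⟨⟨⟨⟨⟨⟨⟨h1, h2⟩, h3⟩, h4⟩, h5⟩, h6⟩, h7⟩, h8⟩ := hx
  have ev : ∀ n : ℤ, sgZ l n ≠ 0 → χ (n : F) = sgZ l n := fun n hn => h.sgZ_eq l n hl hn
  have hz0 : sgZ l z ≠ 0 := by
    intro e; rw [e] at h1; simp at h1
  have hz := ev z hz0
  have zn : (z : F) ≠ 0 := h.ne_zero (by rw [hz]; exact hz0)
  set w : F := (z : F)⁻¹ with hw
  have zw : (z : F) * w = 1 := mul_inv_cancel₀ zn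
  have wn : w ≠ 0 := inv_ne_zero zn
  have hχw : χ w = χ (z : F) := by
    have e := congrArg χ zw
    rw [h.mul, h.one] at e
    rcases h.sgn _ zn with e1 | e1 <;> rw [e1] at e ⊢ <;> omega
  have lin : ∀ (A : F) (n : ℤ) (s : ℤ), s ≠ 0 → sgZ l n * sgZ l z = s → A = n * w → χ A = s := by
    intro A n s hs hn hA
    have : sgZ l n ≠ 0 := by intro e; rw [e] at hn; apply hs; rw [← hn]; ring
    rw [hA, h.mul, hχw, ev n this, hz, hn]
  have quad : ∀ (A : F) (n : ℤ), A = n * (w * w) → sgZ l n ≠ 0 → χ A = sgZ l n := by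
    intro A n hA hn
    rw [hA, h.mul, h.mul_self wn, ev n hn, mul_one]
  refine ⟨x * w, y * w, ?_, ?_, ?_, ?_, ?_, ?_, ?_, ?_⟩
  · exact lin _ _ _ (by decide) h1 rfl
  · exact lin _ _ _ (by decide) h2 rfl
  · exact lin _ _ _ (by decide) h3 (by push_cast; linear_combination -zw)
  · exact lin _ _ _ (by decide) h4 (by push_cast; linear_combination -zw)
  · exact lin _ _ _ (by decide) h5 (by push_cast; linear_combination -zw)
  · exact lin _ _ _ (by decide) h6 (by push_cast; linear_combination -zw)
  · refine side_mono h7 (quad _ _ ?_) (quad _ _ ?_) (quad _ _ ?_) (quad _ _ ?_)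
    · push_cast; linear_combination (-(x - y) * w) * zw
    · push_cast; linear_combination (-y * w) * zw
    · push_cast; linear_combination (y * w) * zw
    · push_cast; linear_combination (-(x - 2 * y) * w) * zw
  · refine side_mono h8 (quad _ _ ?_) (quad _ _ ?_) (quad _ _ ?_) (quad _ _ ?_)
    · push_cast; linear_combination (-(y - x) * w) * zw
    · push_cast; linear_combination (-x * w) * zw
    · push_cast; linear_combination (x * w) * zw
    · push_cast; linear_combination (-(y - 2 * x) * w) * zw

theorem crit_of_tree (h : IsQC χ) (T : Tr) (l : List (ℕ × ℤ)) (ps : List ℕ) (hl : Valid χ l)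
    (hps : ∀ q ∈ ps, (q : F) ≠ 0) (hT : treeOK T l ps = true) :
    (∃ t K, Crit χ t K) ∨ Valid χ envF ∨ Valid χ (envX 1) ∨ Valid χ (envX (-1)) := by
  induction T generalizing l ps with
  | F =>
    simp only [treeOK, decide_eq_true_eq] at hT
    subst hT; exact Or.inr (Or.inl hl)
  | X =>
    simp only [treeOK, Bool.or_eq_true, decide_eq_true_eq] at hT
    rcases hT with rfl | rfl
    · exact Or.inr (Or.inr (Or.inl hl))
    · exact Or.inr (Or.inr (Or.inr hl))
  | L x y z => exact Or.inl (h.crit_of_leaf l hl x y z hT)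
  | N a b iha ihb =>
    cases ps with
    | nil => simp [treeOK] at hT
    | cons q ps =>
      simp only [treeOK, Bool.and_eq_true] at hT
      have hps' : ∀ q ∈ ps, (q : F) ≠ 0 := fun r hr => hps r (by simp [hr])
      rcases h.sgn _ (hps q (by simp)) with e | e
      · exact iha _ _ (by
          intro a ha
          rcases List.mem_cons.1 ha with rfl | ha
          · exact e
          · exact hl a ha) hps' hT.1
      · exact ihb _ _ (by
          intro a ha
          rcases List.mem_cons.1 ha with rfl | ha
          · exact e
          · exact hl a ha) hps' hT.2

end IsQC

open Polynomial

namespace Step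
variable {p : ℕ} [hp : Fact p.Prime]

/-- the k-th reduced derivative operator -/
noncomputable def Lop (f : (ZMod p)[X]) (c : ℕ) : ℕ → ((ZMod p)[X] →ₗ[ZMod p] (ZMod p)[X])
  | 0 => LinearMap.id
  | k + 1 => (LinearMap.mulLeft (ZMod p) f ∘ₗ Polynomial.derivative
      + LinearMap.mulLeft (ZMod p) (C ((c - k : ℕ) : ZMod p) * derivative f)) ∘ₗ Lop f c k

lemma Lop_succ (f : (ZMod p)[X]) (c k : ℕ) (r : (ZMod p)[X]) :
    Lop f c (k+1) r = f * derivative (Lop f c k r)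
      + C ((c - k : ℕ) : ZMod p) * derivative f * Lop f c k r := by
  simp [Lop, mul_assoc]

lemma iter_deriv (f : (ZMod p)[X]) (c j : ℕ) (r : (ZMod p)[X]) (k : ℕ) (hk : k ≤ c) :
    derivative^[k] (f ^ c * r * X ^ (p * j)) = f ^ (c - k) * Lop f c k r * X ^ (p * j) := by
  induction k with
  | zero => simp [Lop]
  | succ k ih =>
    rw [Function.iterate_succ_apply', ih (by omega), Lop_succ]
    obtain ⟨d, rfl⟩ : ∃ d, c = d + (k + 1) := ⟨c - (k+1), by omega⟩
    have h1 : d + (k+1) - k = d + 1 := by omega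
    have h2 : d + (k+1) - (k+1) = d := by omega
    rw [h1, h2]
    have h3 : derivative (X ^ (p * j) : (ZMod p)[X]) = 0 := by
      rw [derivative_X_pow]; simp
    rw [derivative_mul, derivative_mul, h3, derivative_pow_succ]
    push_cast
    ring

lemma Lop_deg (f : (ZMod p)[X]) (n c D : ℕ) (hf : f.natDegree ≤ n + 1) (r : (ZMod p)[X])
    (hr : r.natDegree ≤ D) (k : ℕ) : (Lop f c k r).natDegree ≤ D + k * n := by
  induction k with
  | zero => simpa [Lop] using hr
  | succ k ih =>
    rw [Lop_succ]
    set u := Lop f c k r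
    have hf' : (derivative f).natDegree ≤ n := by
      have := natDegree_derivative_le f
      omega
    refine natDegree_add_le_of_degree_le ?_ ?_
    · by_cases hu : u.natDegree = 0
      · rw [natDegree_eq_zero] at hu
        obtain ⟨a, ha⟩ := hu
        rw [← ha]; simp
      · refine natDegree_mul_le.trans ?_
        have := natDegree_derivative_le u
        have : (k+1)*n = k*n + n := by ring
        omega
    · refine natDegree_mul_le.trans ?_
      have := natDegree_C_mul_le ((c - k : ℕ) : ZMod p) (derivative f)
      have : (k+1)*n = k*n + n := by ring
      omega

/-- `∑_{j<J} r_j X^{pj}` -/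
noncomputable def blk (p : ℕ) [Fact p.Prime] (J : ℕ) (r : ℕ → (ZMod p)[X]) : (ZMod p)[X] :=
  ∑ j ∈ Finset.range J, r j * X ^ (p * j)

lemma blk_succ (J : ℕ) (r : ℕ → (ZMod p)[X]) :
    blk p (J+1) r = r 0 + X ^ p * blk p J (fun j => r (j+1)) := by
  unfold blk
  rw [Finset.sum_range_succ', Finset.mul_sum, add_comm]
  congr 1
  · simp
  · refine Finset.sum_congr rfl fun j _ => ?_
    ring

lemma sq_ne (f r s : (ZMod p)[X]) (a c : ZMod p) (hc : c ≠ 0) (hf : f.rootMultiplicity a = 1)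
    (h : r ^ 2 * f = C c * s ^ 2) : r = 0 ∧ s = 0 := by
  have hf0 : f ≠ 0 := by rintro rfl; simp at hf
  by_cases hr : r = 0
  · subst hr
    have : C c * s ^ 2 = 0 := by rw [← h]; simp
    simp [hc] at this
    exact ⟨rfl, this⟩
  · exfalso
    have hl : r ^ 2 * f ≠ 0 := mul_ne_zero (pow_ne_zero _ hr) hf0
    have hs : s ≠ 0 := by rintro rfl; rw [h] at hl; simp at hl
    have h1 := congrArg (rootMultiplicity a) h
    rw [rootMultiplicity_mul hl, rootMultiplicity_mul (h ▸ hl), rootMultiplicity_C, sq, sq,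
      rootMultiplicity_mul (mul_ne_zero hr hr), rootMultiplicity_mul (mul_ne_zero hs hs), hf] at h1
    omega

lemma blk_zero (f : (ZMod p)[X]) (a : ZMod p) (m D : ℕ) (hm : f.natDegree ≤ m) (h0 : f.eval 0 ≠ 0)
    (hf : f.rootMultiplicity a = 1) (hD : 2 * D + m < p) (J : ℕ) : ∀ (r s : ℕ → (ZMod p)[X]),
    (∀ j, (r j).natDegree ≤ D) → (∀ j, (s j).natDegree ≤ D) →
    (blk p J r) ^ 2 * f = f ^ p * (blk p J s) ^ 2 → ∀ j < J, r j = 0 ∧ s j = 0 := by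
  induction J with
  | zero => intro r s _ _ _ j hj; omega
  | succ J ih =>
    intro r s hr hs h
    rw [blk_succ, blk_succ] at h
    set A := blk p J (fun j => r (j+1)) with hA
    set B := blk p J (fun j => s (j+1)) with hB
    have hX : (X : (ZMod p)[X]) ∣ f - C (f.eval 0) := by
      rw [X_dvd_iff]; simp [coeff_zero_eq_eval_zero]
    have hfp : X ^ p ∣ f ^ p - C (f.eval 0) := by
      have : f ^ p - C (f.eval 0) = (f - C (f.eval 0)) ^ p := by
        rw [sub_pow_char, ← C_pow, ZMod.pow_card]
      rw [this]
      exact pow_dvd_pow_of_dvd hX p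
    obtain ⟨g, hg⟩ := hfp
    have hdvd : X ^ p ∣ (r 0) ^ 2 * f - C (f.eval 0) * (s 0) ^ 2 := by
      have hfe : f ^ p = C (f.eval 0) + X ^ p * g := by rw [← hg]; ring
      refine ⟨g * (s 0 + X ^ p * B) ^ 2 + C (f.eval 0) * (2 * s 0 * B + X ^ p * B ^ 2)
        - (2 * r 0 * A + X ^ p * A ^ 2) * f, ?_⟩
      rw [hfe] at h
      linear_combination h
    have hz : (r 0) ^ 2 * f - C (f.eval 0) * (s 0) ^ 2 = 0 := by
      refine eq_zero_of_dvd_of_natDegree_lt hdvd ?_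
      rw [natDegree_X_pow]
      refine lt_of_le_of_lt ?_ hD
      refine (natDegree_sub_le _ _).trans (max_le ?_ ?_)
      · refine natDegree_mul_le.trans ?_
        have := natDegree_pow_le_of_le 2 (hr 0)
        omega
      · refine (natDegree_C_mul_le _ _).trans ?_
        have := natDegree_pow_le_of_le 2 (hs 0)
        omega
    obtain ⟨hr0, hs0⟩ := sq_ne f _ _ a _ h0 hf (sub_eq_zero.mp hz)
    have h2 : A ^ 2 * f = f ^ p * B ^ 2 := by
      rw [hr0, hs0] at h
      have hx : (X ^ p : (ZMod p)[X]) ^ 2 ≠ 0 := pow_ne_zero _ (pow_ne_zero _ X_ne_zero)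
      refine mul_left_cancel₀ hx ?_
      linear_combination h
    have := ih _ _ (fun j => hr (j+1)) (fun j => hs (j+1)) h2
    intro j hj
    cases j with
    | zero => exact ⟨hr0, hs0⟩
    | succ j => exact this j (by omega)

end Step

open Polynomial

namespace Step
variable {p : ℕ} [hp : Fact p.Prime]

noncomputable def Phi (f : (ZMod p)[X]) (n M J D c1 c2 : ℕ) (ε : ZMod p) :
    ((Fin J → degreeLT (ZMod p) (D+1)) × (Fin J → degreeLT (ZMod p) (D+1))) →ₗ[ZMod p]
      (((k : Fin M) × Fin (D + J + k * n)) → ZMod p) :=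
  LinearMap.pi fun ki => (lcoeff (ZMod p) ki.2) ∘ₗ ∑ j : Fin J,
    (LinearMap.mulRight (ZMod p) (X ^ (j : ℕ))) ∘ₗ
      (Lop f c1 ki.1 ∘ₗ (degreeLT (ZMod p) (D+1)).subtype ∘ₗ LinearMap.proj j ∘ₗ LinearMap.fst _ _ _
      + ε • (Lop f c2 ki.1 ∘ₗ (degreeLT (ZMod p) (D+1)).subtype ∘ₗ LinearMap.proj j ∘ₗ
          LinearMap.snd _ _ _))

lemma Phi_apply (f : (ZMod p)[X]) (n M J D c1 c2 : ℕ) (ε : ZMod p) (v) (k : Fin M)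
    (i : Fin (D + J + k * n)) :
    Phi f n M J D c1 c2 ε v ⟨k, i⟩ = (∑ j : Fin J,
      (Lop f c1 k (v.1 j : (ZMod p)[X]) + C ε * Lop f c2 k (v.2 j : (ZMod p)[X])) * X ^ (j : ℕ)).coeff i := by
  simp only [Phi, LinearMap.pi_apply, LinearMap.comp_apply, LinearMap.sum_apply, lcoeff_apply,
    LinearMap.mulRight_apply, LinearMap.add_apply, LinearMap.smul_apply, LinearMap.proj_apply,
    LinearMap.fst_apply, LinearMap.snd_apply, Submodule.subtype_apply, smul_eq_C_mul]

lemma exists_rs (f : (ZMod p)[X]) (n M J D c1 c2 : ℕ) (ε : ZMod p) (hf : f.natDegree ≤ n + 1)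
    (hdim : ∑ k ∈ Finset.range M, (D + J + k * n) < 2 * (J * (D + 1))) :
    ∃ r s : ℕ → (ZMod p)[X], (∀ j, (r j).natDegree ≤ D) ∧ (∀ j, (s j).natDegree ≤ D) ∧
      (∃ j < J, r j ≠ 0 ∨ s j ≠ 0) ∧
      ∀ k < M, ∑ j ∈ Finset.range J, (Lop f c1 k (r j) + C ε * Lop f c2 k (s j)) * X ^ j = 0 := by
  have hfr : Module.finrank (ZMod p) (degreeLT (ZMod p) (D+1)) = D + 1 := by
    rw [(degreeLTEquiv (ZMod p) (D+1)).finrank_eq]; simp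
  have hfin : Module.Finite (ZMod p) (degreeLT (ZMod p) (D+1)) :=
    Module.Finite.equiv (degreeLTEquiv (ZMod p) (D+1)).symm
  have hker : LinearMap.ker (Phi f n M J D c1 c2 ε) ≠ ⊥ := by
    apply LinearMap.ker_ne_bot_of_finrank_lt
    rw [Module.finrank_prod, Module.finrank_pi, Module.finrank_pi_fintype]
    simp only [hfr, Fintype.card_sigma, Fintype.card_fin, Finset.sum_const, Finset.card_univ,
      smul_eq_mul]
    rw [Fin.sum_univ_eq_sum_range (fun k => D + J + k * n) M]
    omega
  obtain ⟨v, hv, hv0⟩ := Submodule.exists_mem_ne_zero_of_ne_bot hker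
  rw [LinearMap.mem_ker] at hv
  have hdeg : ∀ u : degreeLT (ZMod p) (D+1), (u : (ZMod p)[X]).natDegree ≤ D := by
    intro u
    have := mem_degreeLT.mp u.2
    by_cases hu : (u : (ZMod p)[X]) = 0
    · rw [hu]; simp
    · have := (natDegree_lt_iff_degree_lt hu).mpr this
      omega
  refine ⟨fun j => if h : j < J then v.1 ⟨j, h⟩ else 0, fun j => if h : j < J then v.2 ⟨j, h⟩ else 0,
    ?_, ?_, ?_, ?_⟩
  · intro j
    dsimp only
    split_ifs
    · exact hdeg _
    · simp
  · intro j
    dsimp only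
    split_ifs
    · exact hdeg _
    · simp
  · by_contra hcon
    push Not at hcon
    apply hv0
    ext j : 2
    · have := (hcon j j.2).1
      simp only [j.2, dif_pos] at this
      exact Subtype.ext this
    · have := (hcon j j.2).2
      simp only [j.2, dif_pos] at this
      exact Subtype.ext this
  · intro k hk
    rw [← Fin.sum_univ_eq_sum_range (fun j => (Lop f c1 k (if h : j < J then (v.1 ⟨j, h⟩ : (ZMod p)[X]) else 0)
      + C ε * Lop f c2 k (if h : j < J then (v.2 ⟨j, h⟩ : (ZMod p)[X]) else 0)) * X ^ j) J]
    simp only [Fin.is_lt, dif_pos, Fin.eta]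
    ext i
    by_cases hi : i < D + J + k * n
    · have := congrFun hv ⟨⟨k, hk⟩, ⟨i, hi⟩⟩
      rw [Phi_apply] at this
      simpa using this
    · rw [coeff_eq_zero_of_natDegree_lt, coeff_zero]
      rcases Nat.eq_zero_or_pos J with rfl | hJ
      · exfalso
        simp at hdim
      refine lt_of_le_of_lt (natDegree_sum_le_of_forall_le (n := D + k * n + (J - 1)) _ _ ?_) (by omega)
      intro j _
      refine natDegree_mul_le.trans ?_
      rw [natDegree_X_pow]
      have h1 : (Lop f c1 k (v.1 j : (ZMod p)[X]) + C ε * Lop f c2 k (v.2 j : (ZMod p)[X])).natDegree ≤ D + k * n :=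
        natDegree_add_le_of_degree_le (Lop_deg f n c1 D hf _ (hdeg _) k)
          ((natDegree_C_mul_le _ _).trans (Lop_deg f n c2 D hf _ (hdeg _) k))
      have := j.2
      omega

theorem stepanov (f : (ZMod p)[X]) (a : ZMod p) (n M J D h : ℕ) (ε : ZMod p) (hph : p = 2 * h + 1)
    (hf : f.natDegree ≤ n + 1) (h0 : f.eval 0 ≠ 0) (hfa : f.rootMultiplicity a = 1)
    (hD : 2 * D + (n + 1) < p) (hM : M < p) (hJ : 0 < J)
    (hdim : ∑ k ∈ Finset.range M, (D + J + k * n) < 2 * (J * (D + 1))) (N : Finset (ZMod p))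
    (hN : ∀ x ∈ N, (f.eval x) ^ h = ε) :
    M * N.card ≤ (n + 1) * (M + h) + D + p * (J - 1) := by
  obtain ⟨r, s, hr, hs, ⟨j0, hj0, hne⟩, hz⟩ := exists_rs f n M J D M (M + h) ε hf hdim
  have hf0 : f ≠ 0 := by rintro rfl; simp at hfa
  set R : (ZMod p)[X] := ∑ j ∈ Finset.range J,
    (f ^ M * r j * X ^ (p * j) + f ^ (M + h) * s j * X ^ (p * j)) with hR
  have hRe : R = f ^ M * (blk p J r + f ^ h * blk p J s) := by
    rw [hR, blk, blk, mul_add, Finset.mul_sum, Finset.mul_sum, Finset.mul_sum,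
      ← Finset.sum_add_distrib]
    refine Finset.sum_congr rfl fun j _ => ?_
    rw [pow_add]; ring
  have hR0 : R ≠ 0 := by
    intro hR0
    rw [hRe] at hR0
    have h1 := (mul_eq_zero.mp hR0).resolve_left (pow_ne_zero _ hf0)
    have h2 : (blk p J r) ^ 2 * f = f ^ p * (blk p J s) ^ 2 := by
      have h3 : blk p J r = - (f ^ h * blk p J s) := eq_neg_of_add_eq_zero_left h1
      rw [h3]
      have h4 : f ^ p = (f ^ h) ^ 2 * f := by
        rw [← pow_mul, ← pow_succ]
        congr 1
        omega
      rw [h4]; ring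
    have := blk_zero f a (n+1) D hf h0 hfa hD J r s hr hs h2 j0 hj0
    rcases hne with h | h
    · exact h this.1
    · exact h this.2
  have hdegR : R.natDegree ≤ (n + 1) * (M + h) + D + p * (J - 1) := by
    refine natDegree_sum_le_of_forall_le _ _ ?_
    intro j hj
    have hj : j ≤ J - 1 := by have := Finset.mem_range.mp hj; omega
    have hpj : p * j ≤ p * (J - 1) := Nat.mul_le_mul_left _ hj
    refine natDegree_add_le_of_degree_le ?_ ?_
    · refine natDegree_mul_le.trans ?_
      rw [natDegree_X_pow]
      have h1 : (f ^ M * r j).natDegree ≤ M * (n+1) + D :=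
        natDegree_mul_le.trans (add_le_add (natDegree_pow_le_of_le M hf) (hr j))
      have : (n + 1) * (M + h) = M * (n+1) + (n+1) * h := by ring
      have : 0 ≤ (n+1) * h := Nat.zero_le _
      omega
    · refine natDegree_mul_le.trans ?_
      rw [natDegree_X_pow]
      have h1 : (f ^ (M + h) * s j).natDegree ≤ (M + h) * (n+1) + D :=
        natDegree_mul_le.trans (add_le_add (natDegree_pow_le_of_le (M + h) hf) (hs j))
      have : (n + 1) * (M + h) = (M + h) * (n+1) := by ring
      omega
  have hroot : ∀ x ∈ N, M ≤ R.rootMultiplicity x := by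
    intro x hx
    rcases Nat.eq_zero_or_pos M with hM0 | hM0
    · omega
    have key : ∀ k < M, (derivative^[k] R).IsRoot x := by
      intro k hk
      rw [IsRoot.def, hR, iterate_derivative_sum]
      simp only [iterate_map_add]
      have e1 : ∀ j, derivative^[k] (f ^ M * r j * X ^ (p * j)) + derivative^[k] (f ^ (M + h) * s j * X ^ (p * j))
        = f ^ (M - k) * ((Lop f M k (r j) + f ^ h * Lop f (M + h) k (s j)) * X ^ (p * j)) := by
        intro j
        rw [iter_deriv f M j (r j) k hk.le, iter_deriv f (M+h) j (s j) k (by omega)]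
        have : M + h - k = (M - k) + h := by omega
        rw [this, pow_add]; ring
      simp only [e1]
      rw [← Finset.mul_sum, eval_mul]
      have e2 := congrArg (eval x) (hz k hk)
      have e3 : eval x (∑ j ∈ Finset.range J, (Lop f M k (r j) + f ^ h * Lop f (M + h) k (s j)) * X ^ (p * j))
        = eval x (∑ j ∈ Finset.range J, (Lop f M k (r j) + C ε * Lop f (M + h) k (s j)) * X ^ j) := by
        simp only [eval_finsetSum, eval_mul, eval_add, eval_pow, eval_X, eval_C, hN x hx, pow_mul,
          ZMod.pow_card]
      rw [e3, e2]; simp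
    have := lt_rootMultiplicity_of_isRoot_iterate_derivative_of_mem_nonZeroDivisors (n := M - 1) hR0
      (fun k hk => key k (by omega)) ?_
    · omega
    · rw [mem_nonZeroDivisors_iff_ne_zero]
      intro hfac
      rw [ZMod.natCast_eq_zero_iff, hp.out.dvd_factorial] at hfac
      omega
  calc M * N.card = ∑ x ∈ N, M := by rw [Finset.sum_const, smul_eq_mul, mul_comm]
    _ ≤ ∑ x ∈ N, R.rootMultiplicity x := Finset.sum_le_sum hroot
    _ = ∑ x ∈ N, R.roots.count x := by simp
    _ ≤ Multiset.card R.roots := by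
        classical
        calc ∑ x ∈ N, R.roots.count x ≤ ∑ x ∈ N ∪ R.roots.toFinset, R.roots.count x :=
              Finset.sum_le_sum_of_subset Finset.subset_union_left
          _ = Multiset.card R.roots := Multiset.sum_count_eq_card (by intro a ha; simp at ha ⊢; tauto)
    _ ≤ R.natDegree := card_roots' R
    _ ≤ _ := hdegR
end Step

open Polynomial

namespace Step
variable {p : ℕ} [hp : Fact p.Prime]

lemma charsum {m : ℕ} (α : Fin m → ZMod p) (hα : Function.Injective α) (h0 : ∀ i, α i ≠ 0)
    (h μ : ℕ) (hph : p = 2 * h + 1) (hm : 5 ≤ m) (hm8 : m ≤ 8) (hμ : 1 ≤ μ)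
    (hbig : 2 * m * μ ^ 2 + 18 < 6 * h) (T : Finset (Fin m)) (hT : T.Nonempty) :
    2 * μ * |∑ x : ZMod p, quadraticChar (ZMod p) (∏ i ∈ T, (x - α i))| ≤ 6 * m * μ + (m + 5) * p := by
  classical
  obtain ⟨i0, hi0⟩ := hT
  set f : (ZMod p)[X] := ∏ i ∈ T, (X - C (α i)) with hf
  have hev : ∀ x, f.eval x = ∏ i ∈ T, (x - α i) := by
    intro x; rw [hf, eval_prod]; simp
  have hTm : T.card ≤ m := by simpa using T.card_le_univ
  have hdeg : f.natDegree ≤ m := by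
    rw [hf, natDegree_prod_of_monic _ _ (fun i _ => monic_X_sub_C _)]
    simpa using hTm
  have hf0 : f ≠ 0 := (monic_prod_of_monic _ _ (fun i _ => monic_X_sub_C _)).ne_zero
  have hroot : f.rootMultiplicity (α i0) = 1 := by
    have h1 : f = (X - C (α i0)) * ∏ i ∈ T.erase i0, (X - C (α i)) := by
      rw [hf]; exact (Finset.mul_prod_erase T (fun i => X - C (α i)) hi0).symm
    rw [h1] at hf0 ⊢
    rw [rootMultiplicity_mul hf0, rootMultiplicity_X_sub_C_self, rootMultiplicity_eq_zero]
    rw [IsRoot.def, eval_prod, Finset.prod_eq_zero_iff]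
    rintro ⟨i, hi, hz⟩
    simp only [eval_sub, eval_X, eval_C, sub_eq_zero] at hz
    exact (Finset.ne_of_mem_erase hi) (hα hz).symm
  have hf00 : f.eval 0 ≠ 0 := by
    rw [hev, Finset.prod_ne_zero_iff]
    intro i _; simpa using h0 i
  have hμ2 : μ ≤ μ ^ 2 := by nlinarith
  have hmμ : 10 * μ ^ 2 ≤ 2 * m * μ ^ 2 := by nlinarith
  have main : ∀ (ε : ZMod p) (N : Finset (ZMod p)), (∀ x ∈ N, (f.eval x) ^ h = ε) →
      2 * μ * N.card ≤ m * (2 * μ + h) + (h - 4) + p * (μ + 2) := by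
    intro ε N hN
    obtain ⟨n, rfl⟩ : ∃ n, m = n + 1 := ⟨m - 1, by omega⟩
    have := stepanov f (α i0) n (2 * μ) (μ + 3) (h - 4) h ε hph hdeg hf00 hroot (by omega) (by omega)
      (by omega) ?_ N hN
    · simpa using this
    · rw [Finset.sum_add_distrib, ← Finset.sum_mul, Finset.sum_const, Finset.card_range, smul_eq_mul]
      have hg := Finset.sum_range_id_mul_two (2 * μ)
      have hg2 : (∑ i ∈ Finset.range (2 * μ), i) = μ * (2 * μ - 1) := by
        have : 2 * μ * (2 * μ - 1) = (μ * (2 * μ - 1)) * 2 := by ring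
        omega
      rw [hg2]
      obtain ⟨D, rfl⟩ : ∃ D, h = D + 4 := ⟨h - 4, by omega⟩
      obtain ⟨ν, rfl⟩ : ∃ ν, μ = ν + 1 := ⟨μ - 1, by omega⟩
      have e1 : 2 * (ν + 1) - 1 = 2 * ν + 1 := by omega
      have e2 : D + 4 - 4 = D := by omega
      rw [e1, e2]
      nlinarith
  set P : Finset (ZMod p) := Finset.univ.filter fun x => quadraticChar (ZMod p) (f.eval x) = 1 with hP
  set Q : Finset (ZMod p) := Finset.univ.filter fun x => quadraticChar (ZMod p) (f.eval x) = -1 with hQ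
  set Z : Finset (ZMod p) := Finset.univ.filter fun x => f.eval x = 0 with hZ
  have hchar : ringChar (ZMod p) ≠ 2 := by rw [ZMod.ringChar_zmod_n]; omega
  have hpow : ∀ x : ZMod p, ((quadraticChar (ZMod p) x : ℤ) : ZMod p) = x ^ h := by
    intro x
    rw [quadraticChar_eq_pow_of_char_ne_two' hchar, ZMod.card]
    congr 1; omega
  have hPb := main 1 P (by
    intro x hx
    rw [← hpow, (Finset.mem_filter.mp hx).2]; simp)
  have hQb := main (-1) Q (by
    intro x hx
    rw [← hpow, (Finset.mem_filter.mp hx).2]; simp)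
  have hZb : Z.card ≤ m := by
    refine le_trans (Finset.card_le_card (t := T.image α) ?_) (Finset.card_image_le.trans hTm)
    intro x hx
    have := (Finset.mem_filter.mp hx).2
    rw [hev, Finset.prod_eq_zero_iff] at this
    obtain ⟨i, hi, hz⟩ := this
    exact Finset.mem_image.mpr ⟨i, hi, (sub_eq_zero.mp hz).symm⟩
  have hcase : ∀ x : ZMod p, quadraticChar (ZMod p) x = (if quadraticChar (ZMod p) x = 1 then 1 else 0)
      - (if quadraticChar (ZMod p) x = -1 then 1 else 0) ∧
      (1:ℤ) = (if quadraticChar (ZMod p) x = 1 then 1 else 0)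
      + (if quadraticChar (ZMod p) x = -1 then 1 else 0) + (if x = 0 then 1 else 0) := by
    intro x
    by_cases hx : x = 0
    · subst hx; simp
    · rcases quadraticChar_dichotomy hx with h1 | h1 <;> rw [h1] <;> simp [hx]
  have hsum : ∑ x : ZMod p, quadraticChar (ZMod p) (∏ i ∈ T, (x - α i)) = P.card - Q.card := by
    rw [hP, hQ, Finset.card_filter, Finset.card_filter]
    push_cast
    rw [← Finset.sum_sub_distrib]
    refine Finset.sum_congr rfl fun x _ => ?_
    rw [← hev]; exact (hcase _).1
  have htot : (p : ℤ) = P.card + Q.card + Z.card := by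
    rw [hP, hQ, hZ, Finset.card_filter, Finset.card_filter, Finset.card_filter]
    push_cast
    rw [← Finset.sum_add_distrib, ← Finset.sum_add_distrib]
    have : (p : ℤ) = ∑ x : ZMod p, 1 := by simp [ZMod.card]
    rw [this]
    refine Finset.sum_congr rfl fun x _ => ?_
    exact (hcase _).2
  rw [hsum]
  have hh4 : ((h - 4 : ℕ) : ℤ) ≤ h := by omega
  zify at hPb hQb hZb hph hm8
  have hμ' : (1:ℤ) ≤ μ := by exact_mod_cast hμ
  have hm' : (5:ℤ) ≤ m := by exact_mod_cast hm
  have hh : (0:ℤ) ≤ h := by positivity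
  have hZμ : (μ:ℤ) * Z.card ≤ μ * m := by gcongr
  have hpp : (p:ℤ) * μ = P.card * μ + Q.card * μ + Z.card * μ := by rw [htot]; ring
  have hmh : (m:ℤ) * p = 2 * (m * h) + m := by rw [hph]; ring
  rcases abs_cases ((P.card : ℤ) - Q.card) with ⟨h1, _⟩ | ⟨h1, _⟩ <;> rw [h1] <;> nlinarith

lemma pattern0 {m : ℕ} (α : Fin m → ZMod p) (hα : Function.Injective α) (h0 : ∀ i, α i ≠ 0)
    (h μ : ℕ) (hph : p = 2 * h + 1) (hm : 5 ≤ m) (hm8 : m ≤ 8) (hμ : 1 ≤ μ)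
    (hbig : 2 * m * μ ^ 2 + 18 < 6 * h)
    (hbig2 : (2 ^ m - 1) * (6 * m * μ + (m + 5) * p) + 2 * μ * (m * 2 ^ m) < 2 * μ * (p : ℤ))
    (ε : Fin m → ℤ) (hε : ∀ i, ε i = 1 ∨ ε i = -1) :
    ∃ x : ZMod p, ∀ i, quadraticChar (ZMod p) (x - α i) = ε i := by
  classical
  by_contra hcon
  push Not at hcon
  set χ := quadraticChar (ZMod p)
  have hχ : ∀ x, χ x = 0 ∨ χ x = 1 ∨ χ x = -1 := by
    intro x
    by_cases hx : x = 0
    · left; rw [hx]; exact quadraticChar_zero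
    · right; exact quadraticChar_dichotomy hx
  have hfac : ∀ x i, 0 ≤ 1 + ε i * χ (x - α i) ∧ 1 + ε i * χ (x - α i) ≤ 2 := by
    intro x i
    rcases hε i with h1 | h1 <;> rcases hχ (x - α i) with h2 | h2 | h2 <;> rw [h1, h2] <;> norm_num
  have hprod : ∀ x, ∏ i, (1 + ε i * χ (x - α i)) ≤ if x ∈ Finset.univ.image α then 2 ^ m else 0 := by
    intro x
    split_ifs with hx
    · calc _ ≤ ∏ _i : Fin m, (2:ℤ) := Finset.prod_le_prod (fun i _ => (hfac x i).1) (fun i _ => (hfac x i).2)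
        _ = 2 ^ m := by simp
    · obtain ⟨i, hi⟩ := hcon x
      refine le_of_eq (Finset.prod_eq_zero (Finset.mem_univ i) ?_)
      have hne : x - α i ≠ 0 := by
        intro h'
        exact hx (Finset.mem_image.mpr ⟨i, Finset.mem_univ _, (sub_eq_zero.mp h').symm⟩)
      have h2 : χ (x - α i) = 1 ∨ χ (x - α i) = -1 := quadraticChar_dichotomy hne
      rcases hε i with h1 | h1 <;> rcases h2 with h2 | h2 <;> rw [h1, h2] at hi ⊢ <;> simp_all
  have hup : ∑ x, ∏ i, (1 + ε i * χ (x - α i)) ≤ m * 2 ^ m := by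
    refine (Finset.sum_le_sum fun x _ => hprod x).trans ?_
    rw [Finset.sum_ite_mem, Finset.univ_inter, Finset.sum_const, nsmul_eq_mul]
    have : (Finset.univ.image α).card ≤ m := Finset.card_image_le.trans (by simp)
    have : ((Finset.univ.image α).card : ℤ) ≤ m := by exact_mod_cast this
    gcongr
  have hexp : ∑ x, ∏ i, (1 + ε i * χ (x - α i))
      = ∑ T ∈ (Finset.univ : Finset (Fin m)).powerset, (∏ i ∈ T, ε i) * ∑ x, χ (∏ i ∈ T, (x - α i)) := by
    simp_rw [Finset.prod_one_add]
    rw [Finset.sum_comm]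
    refine Finset.sum_congr rfl fun T _ => ?_
    rw [Finset.mul_sum]
    refine Finset.sum_congr rfl fun x _ => ?_
    rw [Finset.prod_mul_distrib, map_prod]
  have hsplit := Finset.add_sum_erase (Finset.univ : Finset (Fin m)).powerset
    (fun T => (∏ i ∈ T, ε i) * ∑ x, χ (∏ i ∈ T, (x - α i))) (Finset.empty_mem_powerset _)
  have hemp : (∏ i ∈ (∅ : Finset (Fin m)), ε i) * ∑ x : ZMod p, χ (∏ i ∈ (∅ : Finset (Fin m)), (x - α i)) = p := by
    simp [ZMod.card]
  rw [← hexp] at hsplit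
  simp only [hemp] at hsplit
  have hterm : ∀ T ∈ (Finset.univ : Finset (Fin m)).powerset.erase ∅,
      -(6 * m * μ + (m + 5) * p : ℤ) ≤ 2 * μ * ((∏ i ∈ T, ε i) * ∑ x, χ (∏ i ∈ T, (x - α i))) := by
    intro T hT
    have hne : T.Nonempty := Finset.nonempty_iff_ne_empty.mpr (Finset.ne_of_mem_erase hT)
    have hb := charsum α hα h0 h μ hph hm hm8 hμ hbig T hne
    have he : |∏ i ∈ T, ε i| = 1 := by
      rw [Finset.abs_prod]
      refine Finset.prod_eq_one fun i _ => ?_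
      rcases hε i with h1 | h1 <;> rw [h1] <;> norm_num
    refine neg_le_of_abs_le ?_
    rw [abs_mul, abs_mul (∏ i ∈ T, ε i), he, one_mul, abs_of_nonneg (by positivity)]
    exact hb
  have hlow := Finset.card_nsmul_le_sum _ _ _ hterm
  rw [← Finset.mul_sum, Finset.card_erase_of_mem (Finset.empty_mem_powerset _), Finset.card_powerset,
    Finset.card_univ, Fintype.card_fin, nsmul_eq_mul, Nat.cast_sub Nat.one_le_two_pow] at hlow
  push_cast at hlow
  have hμ' : (1:ℤ) ≤ μ := by exact_mod_cast hμ
  nlinarith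

theorem pattern {m : ℕ} (α : Fin m → ZMod p) (hα : Function.Injective α)
    (h μ : ℕ) (hph : p = 2 * h + 1) (hm : 5 ≤ m) (hm8 : m ≤ 8) (hμ : 1 ≤ μ)
    (hbig : 2 * m * μ ^ 2 + 18 < 6 * h)
    (hbig2 : (2 ^ m - 1) * (6 * m * μ + (m + 5) * p) + 2 * μ * (m * 2 ^ m) < 2 * μ * (p : ℤ))
    (ε : Fin m → ℤ) (hε : ∀ i, ε i = 1 ∨ ε i = -1) :
    ∃ x : ZMod p, ∀ i, quadraticChar (ZMod p) (x - α i) = ε i := by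
  classical
  obtain ⟨c, hc⟩ : ∃ c : ZMod p, c ∉ Finset.univ.image α := by
    by_contra! hcon
    have h1 : (Finset.univ : Finset (ZMod p)) ⊆ Finset.univ.image α := fun x _ => hcon x
    have h2 := (Finset.card_le_card h1).trans Finset.card_image_le
    rw [Finset.card_univ, ZMod.card, Finset.card_univ, Fintype.card_fin] at h2
    have : 0 ≤ 2 * m * μ ^ 2 := Nat.zero_le _
    omega
  obtain ⟨x, hx⟩ := pattern0 (fun i => α i - c) (fun i j hij => hα (sub_left_injective hij)) (by
    intro i hi
    exact hc (Finset.mem_image.mpr ⟨i, Finset.mem_univ _, sub_eq_zero.mp hi⟩)) h μ hph hm hm8 hμ hbig hbig2 ε hε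
  refine ⟨x + c, fun i => ?_⟩
  rw [← hx i]
  congr 1
  ring

theorem pattern7 (hodd : p % 2 = 1) (hbig : 2750000 ≤ p) (α : Fin 7 → ZMod p) (hα : Function.Injective α)
    (ε : Fin 7 → ℤ) (hε : ∀ i, ε i = 1 ∨ ε i = -1) :
    ∃ x : ZMod p, ∀ i, quadraticChar (ZMod p) (x - α i) = ε i := by
  refine pattern α hα (p / 2) 765 (by omega) (by norm_num) (by norm_num) (by norm_num) ?_ ?_ ε hε
  · norm_num; omega
  · norm_num; omega

theorem pattern8 (hodd : p % 2 = 1) (hbig : 15000000 ≤ p) (α : Fin 8 → ZMod p) (hα : Function.Injective α)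
    (ε : Fin 8 → ℤ) (hε : ∀ i, ε i = 1 ∨ ε i = -1) :
    ∃ x : ZMod p, ∀ i, quadraticChar (ZMod p) (x - α i) = ε i := by
  refine pattern α hα (p / 2) 1665 (by omega) (by norm_num) (by norm_num) (by norm_num) ?_ ?_ ε hε
  · norm_num; omega
  · norm_num; omega
end Step


namespace Step
variable {p : ℕ} [hp : Fact p.Prime]

/-- The quadratic character as a plain function. -/
noncomputable def qc (p : ℕ) [Fact p.Prime] (x : ZMod p) : ℤ := quadraticChar (ZMod p) x

lemma qc_isQC (h4 : p % 4 = 3) : IsQC (qc p) := isQC_quad (ZMod p) (by rw [ZMod.card]; exact h4)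

lemma qc_sq {x : ZMod p} (hx : qc p x = 1) : ∃ y, y * y = x := by
  have h0 : x ≠ 0 := by rintro rfl; simp [qc] at hx
  obtain ⟨y, hy⟩ := (quadraticChar_one_iff_isSquare h0).mp hx
  exact ⟨y, hy.symm⟩

lemma int_small (hbig : 1000 < p) (n : ℤ) (hn : (n : ZMod p) = 0) (h1 : n.natAbs < 1000) : n = 0 := by
  rw [ZMod.intCast_zmod_eq_zero_iff_dvd] at hn
  by_contra h0
  have := Int.natAbs_le_of_dvd_ne_zero hn h0
  simp at this
  omega

def gA : Fin 7 → ℤ := ![-1, -2, -3, 0, -1, -2, -3]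
def gB : Fin 7 → ℤ := ![0, 0, 0, -1, -1, -1, -1]
def xA : Fin 8 → ℤ := ![0, -1, -1, -2, 2, 0, -3, 1]
def xB : Fin 8 → ℤ := ![0, 1, 0, -1, 1, 1, 0, 1]

lemma g_inj (hbig : 1000 < p) (φ : ZMod p) (hφ : φ * φ = φ + 1) :
    Function.Injective fun i => (gA i : ZMod p) + (gB i : ZMod p) * φ := by
  intro i j hij
  simp only at hij
  have key : ∀ i j : Fin 7, ((gA i - gA j) ^ 2 + (gA i - gA j) * (gB i - gB j) - (gB i - gB j) ^ 2).natAbs < 1000 ∧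
    (((gA i - gA j) ^ 2 + (gA i - gA j) * (gB i - gB j) - (gB i - gB j) ^ 2) = 0 → i = j) := by decide
  refine (key i j).2 (int_small hbig _ ?_ (key i j).1)
  push_cast
  linear_combination ((gA i - gA j : ZMod p) + (gB i - gB j) - (gB i - gB j) * φ) * hij + ((gB i - gB j) ^ 2 : ZMod p) * hφ

lemma x_inj (hbig : 1000 < p) (φ : ZMod p) (hφ : φ * φ = - φ - 1) :
    Function.Injective fun i => (xA i : ZMod p) + (xB i : ZMod p) * φ := by
  intro i j hij
  simp only at hij
  have key : ∀ i j : Fin 8, ((xA i - xA j) ^ 2 - (xA i - xA j) * (xB i - xB j) + (xB i - xB j) ^ 2).natAbs < 1000 ∧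
    (((xA i - xA j) ^ 2 - (xA i - xA j) * (xB i - xB j) + (xB i - xB j) ^ 2) = 0 → i = j) := by decide
  refine (key i j).2 (int_small hbig _ ?_ (key i j).1)
  push_cast
  linear_combination ((xA i - xA j : ZMod p) - (xB i - xB j) - (xB i - xB j) * φ) * hij + ((xB i - xB j) ^ 2 : ZMod p) * hφ

theorem crit_golden (h4 : p % 4 = 3) (hbig : 2750000 ≤ p) (h5 : qc p 5 = 1) :
    ∃ t K, IsQC.Crit (qc p) t K := by
  have h := qc_isQC h4
  have two : (2 : ZMod p) ≠ 0 := by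
    intro h2
    have := int_small (p := p) (by omega) 2 (by exact_mod_cast h2) (by norm_num)
    omega
  obtain ⟨φ, hφ, hφ1⟩ : ∃ φ : ZMod p, φ * φ = φ + 1 ∧ qc p φ = -1 := by
    obtain ⟨y, hy⟩ := qc_sq h5
    obtain ⟨c, hc⟩ : ∃ c : ZMod p, 2 * c = 1 := ⟨2⁻¹, mul_inv_cancel₀ two⟩
    have e1 : ((1 + y) * c) * ((1 + y) * c) = (1 + y) * c + 1 := by
      linear_combination c * c * hy + (3 * c + 1 + y * c) * hc
    have e2 : ((1 - y) * c) * ((1 - y) * c) = (1 - y) * c + 1 := by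
      linear_combination c * c * hy + (3 * c + 1 - y * c) * hc
    have e3 : ((1 + y) * c) * ((1 - y) * c) = -1 := by
      linear_combination - c * c * hy + (-2 * c - 1) * hc
    have e4 := congrArg (qc p) e3
    rw [h.mul, h.neg_one] at e4
    have n0 : (1 + y) * c ≠ 0 := by intro h0; rw [h0] at e3; simp at e3
    rcases h.sgn _ n0 with e | e
    · exact ⟨_, e2, by rw [e] at e4; omega⟩
    · exact ⟨_, e1, e⟩
  obtain ⟨s, hs⟩ := pattern7 (p := p) (by omega) hbig _ (g_inj (by omega) φ hφ) ![1, 1, -1, -1, -1, -1, 1] (by decide)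
  have s0 : qc p (s + 1) = 1 := by
    have := hs 0; simp [gA, gB] at this; exact this
  have s1 : qc p (s + 2) = 1 := by
    have := hs 1; simp [gA, gB] at this; exact this
  have s2 : qc p (s + 3) = -1 := by
    have := hs 2; simp [gA, gB] at this; exact this
  have s3 : qc p (s + φ) = -1 := by
    have := hs 3; simp [gA, gB] at this; exact this
  have s4 : qc p (s + φ + 1) = -1 := by
    have := hs 4; simp only [gA, gB] at this
    rw [show s + φ + 1 = s - (((-1 : ℤ) : ZMod p) + ((-1 : ℤ) : ZMod p) * φ) by push_cast; ring]; exact this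
  have s5 : qc p (s + φ + 2) = -1 := by
    have := hs 5; simp only [gA, gB] at this
    rw [show s + φ + 2 = s - (((-2 : ℤ) : ZMod p) + ((-1 : ℤ) : ZMod p) * φ) by push_cast; ring]; exact this
  have s6 : qc p (s + φ + 3) = 1 := by
    have := hs 6; simp only [gA, gB] at this
    rw [show s + φ + 3 = s - (((-3 : ℤ) : ZMod p) + ((-1 : ℤ) : ZMod p) * φ) by push_cast; ring]; exact this
  have hφ2 : qc p (φ - 1) = -1 := by
    have e : φ * (φ - 1) = 1 := by linear_combination hφ
    have e := congrArg (qc p) e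
    rw [h.mul, h.one, hφ1] at e; omega
  refine ⟨(s + 2) * (φ - 1), (s + 2) * φ, ?_, ?_, ?_, ?_, ?_, ?_, ?_, ?_⟩
  · rw [h.mul, s1, hφ2]; rfl
  · rw [h.mul, s1, hφ1]; rfl
  · rw [show 1 + (s + 2) * (φ - 1) = (φ - 1) * (s + φ + 2) by linear_combination - hφ, h.mul, hφ2, s5]; rfl
  · rw [show 1 + (s + 2) * φ = φ * (s + φ + 1) by linear_combination - hφ, h.mul, hφ1, s4]; rfl
  · rw [show 1 + (s + 2) * (φ - 1) - (s + 2) * φ = -(s + 1) by ring, h.neg, s0]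
  · rw [show 1 - (s + 2) * (φ - 1) + (s + 2) * φ = s + 3 by ring, s2]
  · have hV : qc p ((s + 2) * (φ - 1) - (s + 2) * φ - (s + 2) * φ * ((s + 2) * (φ - 1))) = 1 := by
      rw [show (s + 2) * (φ - 1) - (s + 2) * φ - (s + 2) * φ * ((s + 2) * (φ - 1)) = -((s + 2) * (s + 3)) by
        linear_combination - (s + 2) ^ 2 * hφ, h.neg, h.mul, s1, s2]; rfl
    have hU : qc p ((s + 2) * φ + ((s + 2) * φ - (s + 2) * (φ - 1)) * ((s + 2) * (φ - 1))) = -1 := by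
      rw [show (s + 2) * φ + ((s + 2) * φ - (s + 2) * (φ - 1)) * ((s + 2) * (φ - 1))
        = (s + 2) * (φ - 1) * (s + φ + 3) by linear_combination - (s + 2) * hφ, h.mul, h.mul, s1, hφ2, s6]; rfl
    rw [hV, hU]
    simp [SideOK]
  · have hU : qc p ((s + 2) * (φ - 1) + ((s + 2) * (φ - 1) - (s + 2) * φ) * ((s + 2) * φ)) = -1 := by
      rw [show (s + 2) * (φ - 1) + ((s + 2) * (φ - 1) - (s + 2) * φ) * ((s + 2) * φ)
        = -((s + 2) * φ * (s + φ)) by linear_combination (s + 2) * hφ, h.neg, h.mul, h.mul, s1, hφ1, s3]; rfl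
    have hP : qc p (((s + 2) * φ) ^ 2 - 2 * ((s + 2) * (φ - 1)) * ((s + 2) * φ) - (s + 2) * (φ - 1)) = -1 := by
      rw [show ((s + 2) * φ) ^ 2 - 2 * ((s + 2) * (φ - 1)) * ((s + 2) * φ) - (s + 2) * (φ - 1)
        = (s + 2) * (φ - 1) * (s + 1) by linear_combination - (s + 2) ^ 2 * hφ, h.mul, h.mul, s1, hφ2, s0]; rfl
    rw [hP, hU]
    simp [SideOK]

theorem crit_omega (h4 : p % 4 = 3) (hbig : 15000000 ≤ p) (h3 : qc p 3 = -1) :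
    ∃ t K, IsQC.Crit (qc p) t K := by
  have h := qc_isQC h4
  have two : (2 : ZMod p) ≠ 0 := by
    intro h2
    have := int_small (p := p) (by omega) 2 (by exact_mod_cast h2) (by norm_num)
    omega
  have three : (3 : ZMod p) ≠ 0 := h.ne_zero (by rw [h3]; decide)
  obtain ⟨w, hw, hw1⟩ : ∃ w : ZMod p, w * w = - w - 1 ∧ qc p (1 - w) = 1 := by
    obtain ⟨y, hy⟩ := qc_sq (p := p) (x := -3) (by rw [h.neg, h3]; rfl)
    obtain ⟨c, hc⟩ : ∃ c : ZMod p, 2 * c = 1 := ⟨2⁻¹, mul_inv_cancel₀ two⟩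
    have e1 : ((-1 + y) * c) * ((-1 + y) * c) = - ((-1 + y) * c) - 1 := by
      linear_combination c * c * hy + (- c - 1 - y * c) * hc
    have e2 : ((-1 - y) * c) * ((-1 - y) * c) = - ((-1 - y) * c) - 1 := by
      linear_combination c * c * hy + (- c - 1 + y * c) * hc
    have e3 : (1 - (-1 + y) * c) * (1 - (-1 - y) * c) = 3 := by
      linear_combination - c * c * hy + (2 * c + 2) * hc
    have e4 := congrArg (qc p) e3
    rw [h.mul, h3] at e4
    have n0 : (1 - (-1 + y) * c) ≠ 0 := by
      intro h0; rw [h0] at e3; simp at e3; exact three e3.symm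
    rcases h.sgn _ n0 with e | e
    · exact ⟨_, e1, e⟩
    · exact ⟨_, e2, by rw [e] at e4; omega⟩
  have ww : qc p w = 1 := by
    have w0 : w ≠ 0 := by rintro rfl; simp at hw
    refine h.eq_one (w * w) w0 ?_
    linear_combination (- w * w + w) * hw
  obtain ⟨d, hd⟩ : ∃ d : ZMod p, (1 - w) * d = 1 :=
    ⟨(1 - w)⁻¹, mul_inv_cancel₀ (h.ne_zero (by rw [hw1]; decide))⟩
  have hd1 : qc p d = 1 := by
    have e := congrArg (qc p) hd
    rw [h.mul, h.one, hw1] at e; omega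
  obtain ⟨K, hs⟩ := pattern8 (p := p) (by omega) hbig _ (x_inj (by omega) w hw) ![-1, 1, 1, 1, -1, 1, -1, 1] (by decide)
  have get : ∀ (i : Fin 8) (z : ZMod p), z = K - ((xA i : ZMod p) + (xB i : ZMod p) * w) →
    qc p z = (![-1, 1, 1, 1, -1, 1, -1, 1] : Fin 8 → ℤ) i := by
    rintro i z rfl
    exact hs i
  have s0 : qc p K = -1 := get 0 _ (by simp [xA, xB])
  have s1 : qc p (K + 1 - w) = 1 := get 1 _ (by simp [xA, xB]; ring)
  have s2 : qc p (1 + K) = 1 := get 2 _ (by simp [xA, xB]; ring)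
  have s3 : qc p (K + 2 + w) = 1 := get 3 _ (by simp [xA, xB]; ring)
  have s4 : qc p (K - 2 - w) = -1 := get 4 _ (by simp [xA, xB]; ring)
  have s5 : qc p (K - w) = 1 := get 5 _ (by simp [xA, xB])
  have s6 : qc p (K + 3) = -1 := get 6 _ (by simp [xA, xB])
  have s7 : qc p (K - 1 - w) = 1 := get 7 _ (by simp [xA, xB]; ring)
  obtain ⟨t, ht⟩ : ∃ t, t = K * d := ⟨_, rfl⟩
  have hK : K = (1 - w) * t := by rw [ht]; linear_combination - K * hd
  have t1 : qc p t = -1 := by rw [ht, h.mul, s0, hd1]; rfl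
  refine ⟨t, K, t1, s0, ?_, s2, ?_, ?_, ?_, ?_⟩
  · rw [show 1 + t = d * (K + 1 - w) by rw [ht]; linear_combination - hd, h.mul, hd1, s1]; rfl
  · rw [show 1 + t - K = d * w * (K - 2 - w) by
      rw [ht]; linear_combination (K - 1) * hd + d * hw, h.mul, h.mul, hd1, ww, s4]; rfl
  · rw [show 1 - t + K = -(d * w * (K + 2 + w)) by
      rw [ht]; linear_combination (- 1 - K) * hd + d * hw, h.neg, h.mul, h.mul, hd1, ww, s3]; rfl
  · have hV : qc p (t - K - K * t) = 1 := by
      rw [show t - K - K * t = -(t * (K - w)) by rw [hK]; ring, h.neg, h.mul, t1, s5]; rfl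
    have hU : qc p (K + (K - t) * t) = -1 := by
      rw [show K + (K - t) * t = -(t * d * w * (K + 3)) by
        linear_combination (1 + t) * hK - t * w * ht - t * (1 - w) * hd + t * d * hw, h.neg, h.mul, h.mul, h.mul, t1, hd1, ww, s6]; rfl
    rw [hV, hU]
    simp [SideOK]
  · have hU : qc p (t + (t - K) * K) = -1 := by
      rw [show t + (t - K) * K = t * w * (K - 1 - w) by
        rw [hK]; linear_combination t * hw, h.mul, h.mul, t1, ww, s7]; rfl
    have hP : qc p (K ^ 2 - 2 * t * K - t) = -1 := by
      rw [show K ^ 2 - 2 * t * K - t = t * (w * w) * (K - w) by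
        rw [hK]; linear_combination (- t ^ 2 * (1 - w) - t * (1 - w)) * hw, h.mul, h.mul, h.mul, t1, ww, s5]; rfl
    rw [hP, hU]
    simp [SideOK]
end Step


namespace Step

/-- One Euler criterion test. -/
def chk (c : ℕ × ℕ × ℕ) (n : ℕ) : Bool := Nat.beq (Nat.mod (Nat.pow (Nat.mod n c.1) c.2.1) c.1) c.2.2

def pass : List (ℕ × ℕ × ℕ) → ℕ → Bool
  | [], _ => true
  | c :: l, n => cond (chk c n) (pass l n) false

/-- Sieve by residue classes; the modulus `step` grows along the list. -/
def lev (L : List (ℕ × ℕ × ℕ)) (E : List ℕ) (B J : ℕ) : List (ℕ × ℕ × ℕ) → ℕ → ℕ → Bool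
  | [], step, a => (List.range J).all fun j =>
      cond (pass L (Nat.add a (Nat.mul step j)))
        (Nat.ble B (Nat.add a (Nat.mul step j)) || decide (Nat.add a (Nat.mul step j) ∈ E)) true
  | c :: cs, step, a => (List.range c.1).all fun j =>
      cond (chk c (Nat.add a (Nat.mul step j)))
        (lev L E B J cs (Nat.mul step c.1) (Nat.add a (Nat.mul step j))) true

lemma chk_iff (c : ℕ × ℕ × ℕ) (n : ℕ) : chk c n = true ↔ (n % c.1) ^ c.2.1 % c.1 = c.2.2 := by
  unfold chk
  rw [Nat.beq_eq]
  rfl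

lemma pass_iff (L : List (ℕ × ℕ × ℕ)) (n : ℕ) : pass L n = true ↔ ∀ c ∈ L, chk c n = true := by
  induction L with
  | nil => simp [pass]
  | cons c l ih =>
    simp only [pass, List.mem_cons, forall_eq_or_imp, ← ih]
    cases chk c n <;> simp

lemma lev_sound (L : List (ℕ × ℕ × ℕ)) (E : List ℕ) (B J n : ℕ) (hB : n < B) (hL : pass L n = true)
    (cs : List (ℕ × ℕ × ℕ)) : ∀ (step a : ℕ), 0 < step → lev L E B J cs step a = true →
    (∃ i, n = a + step * i) → (∀ c ∈ cs, 0 < c.1 ∧ chk c n = true) →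
    n < step * (cs.map Prod.fst).prod * J → n ∈ E := by
  induction cs with
  | nil =>
    rintro step a hs h ⟨i, hi⟩ - hlt
    simp only [lev, List.all_eq_true] at h
    have hiJ : i < J := by
      simp only [List.map_nil, List.prod_nil, mul_one] at hlt
      have : step * i < step * J := by omega
      exact Nat.lt_of_mul_lt_mul_left this
    have := h i (List.mem_range.mpr hiJ)
    have e : Nat.add a (Nat.mul step i) = n := hi.symm
    rw [e, hL] at this
    simp only [cond_true, Bool.or_eq_true, Nat.ble_eq, decide_eq_true_eq] at this
    rcases this with h | h
    · omega
    · exact h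
  | cons c cs ih =>
    rintro step a hs h ⟨i, hi⟩ hc hlt
    simp only [lev, List.all_eq_true] at h
    obtain ⟨c0, c1⟩ := hc c (by simp)
    have := h (i % c.1) (List.mem_range.mpr (Nat.mod_lt _ c0))
    have e : n = Nat.add a (Nat.mul step (i % c.1)) + step * c.1 * (i / c.1) := by
      have e1 : Nat.add a (Nat.mul step (i % c.1)) = a + step * (i % c.1) := rfl
      rw [e1, hi]
      conv_lhs => rw [← Nat.mod_add_div i c.1]
      ring
    have e2 : chk c (Nat.add a (Nat.mul step (i % c.1))) = true := by
      rw [chk_iff] at c1 ⊢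
      rw [← c1]
      congr 2
      conv_rhs => rw [e]
      rw [show step * c.1 * (i / c.1) = c.1 * (step * (i / c.1)) by ring, Nat.add_mul_mod_self_left]
    rw [e2, cond_true] at this
    refine ih _ _ (Nat.mul_pos hs c0) this ⟨_, e⟩ (fun d hd => hc d (by simp [hd])) ?_
    refine lt_of_lt_of_eq hlt ?_
    simp only [List.map_cons, List.prod_cons]
    ring

def tgt (a : ℕ × ℤ) : ℕ × ℕ × ℕ := (a.1, a.1 / 2, if (a.2 = 1 ↔ a.1 % 4 = 1) then 1 else a.1 - 1)

variable {p : ℕ} [hp : Fact p.Prime]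

lemma recip (h4 : p % 4 = 3) (l : ℕ) (e : ℤ) (hl : l.Prime) (h2 : l ≠ 2) (he : e = 1 ∨ e = -1)
    (h : qc p (l : ZMod p) = e) : chk (tgt (l, e)) p = true := by
  have : Fact l.Prime := ⟨hl⟩
  have hl2 : 2 < l := lt_of_le_of_ne hl.two_le (Ne.symm h2)
  have hodd : l % 2 = 1 := (hl.eq_two_or_odd).resolve_left h2
  rw [chk_iff]
  have h' : legendreSym p l = e := by
    rw [← h]; simp [legendreSym, qc]
  have key : legendreSym l p = if (e = 1 ↔ l % 4 = 1) then 1 else -1 := by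
    have : l % 4 = 1 ∨ l % 4 = 3 := by omega
    rcases this with h1 | h1
    · have := legendreSym.quadratic_reciprocity_one_mod_four (p := l) (q := p) h1 (by rintro rfl; omega)
      rw [← this] 
      rw [h'] at this
      rcases he with rfl | rfl <;> simp [*]
    · have := legendreSym.quadratic_reciprocity_three_mod_four (p := p) (q := l) h4 h1
      rw [this, h']
      rcases he with rfl | rfl <;> simp [h1]
  have e1 := legendreSym.eq_pow l (p : ℤ)
  rw [key] at e1
  have e2 : (((p % l) ^ (l / 2) : ℕ) : ZMod l) = ((if (e = 1 ↔ l % 4 = 1) then 1 else l - 1 : ℕ) : ZMod l) := by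
    push_cast
    rw [ZMod.natCast_mod]
    push_cast at e1
    rw [← e1]
    split_ifs
    · simp
    · rw [Nat.cast_sub (by omega)]; simp
  rw [ZMod.natCast_eq_natCast_iff'] at e2
  simp only [tgt]
  rw [e2]
  split_ifs
  · exact Nat.mod_eq_of_lt (by omega)
  · exact Nat.mod_eq_of_lt (by omega)

lemma mod8 (h4 : p % 4 = 3) (h : qc p 2 = 1) : p % 8 = 7 := by
  have h' : legendreSym p 2 = 1 := by
    rw [← h]; simp [legendreSym, qc]
  rw [legendreSym.at_two (by rintro rfl; omega), ZMod.χ₈_nat_eq_if_mod_eight] at h'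
  split_ifs at h' <;> omega

def F1 : List (ℕ × ℕ × ℕ) := [(5, 2, 1), (7, 3, 6), (11, 5, 10), (13, 6, 1), (17, 8, 1)]
def F2 : List (ℕ × ℕ × ℕ) := [(19, 9, 18), (23, 11, 22), (29, 14, 1), (31, 15, 30), (37, 18, 1),
  (41, 20, 1), (43, 21, 42)]
def X1 : List (ℕ × ℕ × ℕ) := [(5, 2, 4), (11, 5, 10), (13, 6, 12), (17, 8, 16), (19, 9, 1)]
def X2 : List (ℕ × ℕ × ℕ) := [(23, 11, 22), (29, 14, 1), (31, 15, 1), (37, 18, 1), (41, 20, 40),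
  (43, 21, 42), (47, 23, 1), (53, 26, 1), (59, 29, 1), (61, 30, 60)]

lemma sieveF : lev F2 [2155919, 2704679] 2750000 2 F1 24 23 = true := by decide +kernel
lemma sieveX : lev ((7, 6, 1) :: X2) [] 15000000 3 X1 24 7 = true := by decide +kernel

lemma prF : ∀ c ∈ F1 ++ F2, ∃ a ∈ envF, tgt a = c ∧ a.1.Prime ∧ a.1 ≠ 2 ∧ (a.2 = 1 ∨ a.2 = -1) := by
  decide +kernel
lemma prX : ∀ e ∈ [(1:ℤ), -1], ∀ c ∈ X1 ++ X2, ∃ a ∈ envX e, tgt a = c ∧ a.1.Prime ∧ a.1 ≠ 2 ∧ (a.2 = 1 ∨ a.2 = -1) := by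
  decide +kernel

lemma bigF (h4 : p % 4 = 3) (hv : IsQC.Valid (qc p) envF) : 2750000 ≤ p := by
  by_contra hlt
  have m8 := mod8 h4 (by have := hv (2, 1) (by decide); simpa using this)
  have m3 := recip h4 3 1 (by norm_num) (by norm_num) (by norm_num) (hv (3, 1) (by decide))
  rw [chk_iff] at m3
  simp [tgt] at m3
  have hall : ∀ c ∈ F1 ++ F2, chk c p = true := by
    intro c hc
    obtain ⟨⟨l, e⟩, ha, rfl, h1, h2, h3⟩ := prF c hc
    exact recip h4 l e h1 h2 h3 (hv _ ha)
  have := lev_sound F2 [2155919, 2704679] 2750000 2 p (by omega)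
    ((pass_iff _ _).mpr fun c hc => hall c (by simp [hc])) F1 24 23 (by norm_num) sieveF
    ⟨p / 24, by omega⟩ (fun c hc => ⟨by revert c; decide, hall c (by simp [hc])⟩) (by simp [F1]; omega)
  have hpr := hp.out
  simp only [List.mem_cons, List.not_mem_nil, or_false] at this
  rcases this with h | h <;> rw [h] at hpr <;> norm_num at hpr

lemma bigX (h4 : p % 4 = 3) (h7 : 7 < p) (e : ℤ) (he : e = 1 ∨ e = -1) (hv : IsQC.Valid (qc p) (envX e)) :
    15000000 ≤ p := by
  by_contra hlt
  have m8 := mod8 h4 (by have := hv (2, 1) (by simp [envX]); simpa using this)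
  have m3 := recip h4 3 (-1) (by norm_num) (by norm_num) (by norm_num) (hv (3, -1) (by simp [envX]))
  rw [chk_iff] at m3
  simp [tgt] at m3
  have hall : ∀ c ∈ X1 ++ X2, chk c p = true := by
    intro c hc
    obtain ⟨⟨l, e⟩, ha, rfl, h1, h2, h3⟩ := prX e (by simpa using he) c hc
    exact recip h4 l e h1 h2 h3 (hv _ ha)
  have c7 : chk (7, 6, 1) p = true := by
    rw [chk_iff]
    have h0 : p % 7 ≠ 0 := by
      intro h0
      have := (Nat.prime_dvd_prime_iff_eq (by norm_num) hp.out).mp (Nat.dvd_of_mod_eq_zero h0)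
      omega
    have : p % 7 < 7 := Nat.mod_lt _ (by norm_num)
    simp only
    generalize p % 7 = r at *
    interval_cases r <;> simp_all
  have := lev_sound ((7, 6, 1) :: X2) [] 15000000 3 p (by omega)
    ((pass_iff _ _).mpr fun c hc => (List.mem_cons.mp hc).elim (fun h => h ▸ c7) (fun hc => hall c (by simp [hc])))
    X1 24 7 (by norm_num) sieveX
    ⟨p / 24, by omega⟩ (fun c hc => ⟨by revert c; decide, hall c (by simp [hc])⟩) (by simp [X1]; omega)
  simp at this
end Step


namespace Step

lemma hasM_small (p : ℕ) [Fact p.Prime] (h4 : p % 4 = 3) (t K : ZMod p)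
    (hc : IsQC.Crit (fun x => quadraticChar (ZMod p) x) t K) : HasM p := by
  have := (isQC_quad (ZMod p) (by rw [ZMod.card]; exact h4)).hasM_of_crit hc
  rwa [Nat.card_zmod] at this

instance fact_pr_19 : Fact (Nat.Prime 19) := ⟨by norm_num⟩
lemma hasM_19 : HasM 19 := by
  refine hasM_small 19 (by norm_num) 3 15 ?_
  unfold IsQC.Crit; decide +kernel
instance fact_pr_23 : Fact (Nat.Prime 23) := ⟨by norm_num⟩
lemma hasM_23 : HasM 23 := by
  refine hasM_small 23 (by norm_num) 5 15 ?_
  unfold IsQC.Crit; decide +kernel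
instance fact_pr_31 : Fact (Nat.Prime 31) := ⟨by norm_num⟩
lemma hasM_31 : HasM 31 := by
  refine hasM_small 31 (by norm_num) 13 24 ?_
  unfold IsQC.Crit; decide +kernel
instance fact_pr_43 : Fact (Nat.Prime 43) := ⟨by norm_num⟩
lemma hasM_43 : HasM 43 := by
  refine hasM_small 43 (by norm_num) 3 20 ?_
  unfold IsQC.Crit; decide +kernel
instance fact_pr_47 : Fact (Nat.Prime 47) := ⟨by norm_num⟩
lemma hasM_47 : HasM 47 := by
  refine hasM_small 47 (by norm_num) 5 15 ?_
  unfold IsQC.Crit; decide +kernel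
instance fact_pr_59 : Fact (Nat.Prime 59) := ⟨by norm_num⟩
lemma hasM_59 : HasM 59 := by
  refine hasM_small 59 (by norm_num) 2 44 ?_
  unfold IsQC.Crit; decide +kernel

lemma hasM_prime (p : ℕ) (hpr : p.Prime) (h4 : p % 4 = 3) (h19 : 19 ≤ p) : HasM p := by
  by_cases hs : p ≤ 61
  · have : p = 19 ∨ p = 23 ∨ p = 31 ∨ p = 43 ∨ p = 47 ∨ p = 59 := by
      interval_cases p <;> first | omega | (exfalso; revert hpr; norm_num)
    rcases this with rfl | rfl | rfl | rfl | rfl | rfl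
    exacts [hasM_19, hasM_23, hasM_31, hasM_43, hasM_47, hasM_59]
  · have : Fact p.Prime := ⟨hpr⟩
    have h := qc_isQC (p := p) h4
    have hps : ∀ q ∈ primeList, ((q : ℕ) : ZMod p) ≠ 0 := by
      intro q hq h0
      have hb : ∀ q ∈ primeList, 0 < q ∧ q ≤ 61 := by decide
      rw [ZMod.natCast_eq_zero_iff] at h0
      have := Nat.le_of_dvd (hb q hq).1 h0
      have := (hb q hq).2
      omega
    have hcrit : ∃ t K, IsQC.Crit (qc p) t K := by
      rcases h.crit_of_tree bigTree [] primeList (by intro a ha; simp at ha) hps bigTree_ok with hc | hv | hv | hv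
      · exact hc
      · exact crit_golden h4 (bigF h4 hv) (by have := hv (5, 1) (by decide); simpa using this)
      · exact crit_omega h4 (bigX h4 (by omega) 1 (by simp) hv) (by have := hv (3, -1) (by decide); simpa using this)
      · exact crit_omega h4 (bigX h4 (by omega) (-1) (by simp) hv) (by have := hv (3, -1) (by decide); simpa using this)
    obtain ⟨t, K, hc⟩ := hcrit
    have := h.hasM_of_crit hc
    rwa [Nat.card_zmod] at this

lemma hasM_q (q : ℕ) (hq : IsPrimePow q) (h4 : q % 4 = 3) (h19 : 19 ≤ q) : HasM q := by
  obtain ⟨p, k, hp, hk, rfl⟩ := (isPrimePow_nat_iff q).mp hq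
  have hp4 : p % 4 = 3 := by
    have : p % 4 < 4 := Nat.mod_lt _ (by norm_num)
    rw [Nat.pow_mod] at h4
    generalize p % 4 = r at *
    interval_cases r
    · rw [zero_pow (by omega)] at h4; simp at h4
    · simp at h4
    · obtain ⟨j, rfl⟩ : ∃ j, k = j + 1 := ⟨k - 1, by omega⟩
      rw [pow_succ] at h4; omega
    · rfl
  have hodd : k % 2 = 1 := by
    by_contra hk2
    obtain ⟨j, rfl⟩ : ∃ j, k = 2 * j := ⟨k / 2, by omega⟩
    rw [pow_mul, Nat.pow_mod, Nat.pow_mod p 2, hp4] at h4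
    norm_num at h4
  by_cases hp19 : 19 ≤ p
  · exact (hasM_prime p hp hp4 hp19).pow k
  have key : ∀ a b : ℕ, p ^ 3 = a → p ^ 2 = b → p < 19 → HasM a → HasM b → 0 < b → HasM (p ^ k) := by
    intro a b h3 h2 hlt ha hb hb0
    have hk1 : k ≠ 1 := by rintro rfl; rw [pow_one] at h19; omega
    obtain ⟨j, rfl⟩ : ∃ j, k = 3 + 2 * j := ⟨(k - 3) / 2, by omega⟩
    rw [pow_add, pow_mul, h3, h2]
    exact ha.mul (hb.pow j)
  have : p = 3 ∨ p = 7 ∨ p = 11 := by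
    interval_cases p <;> first | omega | (exfalso; revert hp; norm_num)
  rcases this with rfl | rfl | rfl
  · exact key 27 9 (by norm_num) (by norm_num) (by norm_num) hasM_27 hasM_9 (by norm_num)
  · exact key 343 49 (by norm_num) (by norm_num) (by norm_num) hasM_343 hasM_49 (by norm_num)
  · exact key 1331 121 (by norm_num) (by norm_num) (by norm_num) hasM_1331 hasM_121 (by norm_num)
end Step

/-- Theorem 3.6: for every prime power `q ≡ 3 (mod 4)` with `q ≥ 19` there is a
maximally nonassociative quasigroup of order `q`. -/
theorem exists_maxNonassoc_q3mod4 (q : ℕ) (hq : IsPrimePow q)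
    (h4 : q % 4 = 3) (h19 : 19 ≤ q) :
    ∃ (Q : Type) (m : Q → Q → Q),
      Nat.card Q = q ∧
      (∀ a b : Q, (∃! x, m a x = b) ∧ (∃! y, m y a = b)) ∧
      Nat.card {t : Q × Q × Q //
        m (m t.1 t.2.1) t.2.2 = m t.1 (m t.2.1 t.2.2)} = q := by
  obtain ⟨Q, m, hfin, hcard, hm⟩ := Step.hasM_q q hq h4 h19
  exact ⟨Q, m, hcard, hm.1, by rw [hm.count, hcard]⟩
end

section
/- Let q be an odd prime power and let a ∈ F_q satisfy a ∉ {−1, 0, 1} and both a and a+1 squares in F_q (so that L := L_{a,a²} is a Latin square). Then there is no associative triple of the form (t, t, v) with t ≠ v: for all t, v ∈ F_q with t ≠ v, L(L(t,t), v) ≠ L(t, L(t,v)). -/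
open scoped Classical

/-- No associative triple of `L_{a,a²}` has the form `(t,t,v)` with `t ≠ v`. -/
theorem Laa2_no_assoc_ttv (F : Type*) [Field F] [Fintype F]
    (q : ℕ) (hq : Fintype.card F = q) (hodd : Odd q)
    (a : F) (ha1 : a ≠ -1) (ha2 : a ≠ 0) (ha3 : a ≠ 1)
    (hs1 : IsSquare a) (hs2 : IsSquare (a + 1))
    (L : F → F → F)
    (hL : ∀ x y : F,
      L x y = if IsSquare (y - x) then x + a * (y - x) else x + a ^ 2 * (y - x)) :
    ∀ t v : F, t ≠ v → L (L t t) v ≠ L t (L t v) := by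
  intro t v htv h
  have hd : v - t ≠ 0 := sub_ne_zero.mpr (Ne.symm htv)
  have htt : L t t = t := by rw [hL]; simp
  rw [htt] at h
  by_cases hs : IsSquare (v - t)
  · have h1 : L t v = t + a * (v - t) := by rw [hL, if_pos hs]
    have h2 : L t (t + a * (v - t)) = t + a * (a * (v - t)) := by
      rw [hL, add_sub_cancel_left, if_pos (hs1.mul hs)]
    rw [h1, h2] at h
    have h3 : a * (v - t) * (a - 1) = 0 := by linear_combination -h
    exact mul_ne_zero (mul_ne_zero ha2 hd) (sub_ne_zero.mpr ha3) h3
  · have h1 : L t v = t + a ^ 2 * (v - t) := by rw [hL, if_neg hs]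
    have hn : ¬ IsSquare (a ^ 2 * (v - t)) := by
      rintro ⟨r, hr⟩
      apply hs
      refine ⟨r / a, ?_⟩
      field_simp
      linear_combination hr
    have h2 : L t (t + a ^ 2 * (v - t)) = t + a ^ 2 * (a ^ 2 * (v - t)) := by
      rw [hL, add_sub_cancel_left, if_neg hn]
    rw [h1, h2] at h
    have h3 : a ^ 2 * (v - t) * ((a - 1) * (a + 1)) = 0 := by linear_combination -h
    have h4 : a + 1 ≠ 0 := fun h5 => ha1 (eq_neg_of_add_eq_zero_left h5)
    exact mul_ne_zero (mul_ne_zero (pow_ne_zero 2 ha2) hd)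
      (mul_ne_zero (sub_ne_zero.mpr ha3) h4) h3
end

section
/- Let q ≡ 1 (mod 4) be a prime power and let a ∈ F_q be such that a ≠ −1, 0, 1, the elements a, a+1, a³−a−1 are squares in F_q, and the elements a−1, a²+1, a²−a−1, a²+a+1, a²+a−1 are non-squares in F_q. Write L := L_{a,a²}. Then for every non-square η ∈ F_q, no triple of the form (0, η, z) is associative: for every z ∈ F_q, L(L(0,η), z) ≠ L(0, L(η,z)). -/
open scoped Classical

lemma aux_N {F : Type*} [Field F] [Fintype F] (h2 : ringChar F ≠ 2) {x y : F}
    (hx : ¬ IsSquare x) (hy : ¬ IsSquare y) : IsSquare (x * y) := by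
  have hx' := (quadraticChar_neg_one_iff_not_isSquare).2 hx
  have hy' := (quadraticChar_neg_one_iff_not_isSquare).2 hy
  have hx0 : x ≠ 0 := by rintro rfl; exact hx (IsSquare.zero)
  have hy0 : y ≠ 0 := by rintro rfl; exact hy (IsSquare.zero)
  rw [← quadraticChar_one_iff_isSquare (mul_ne_zero hx0 hy0), map_mul, hx', hy']
  norm_num

lemma aux_H {F : Type*} [Field F] {s n : F} (hs : IsSquare s) (h0 : s ≠ 0)
    (hn : ¬ IsSquare n) : ¬ IsSquare (s * n) := by
  intro h
  apply hn
  have := h.div hs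
  rwa [mul_div_cancel_left₀ _ h0] at this

/-- Case `q ≡ 1 (mod 4)`: no triple `(0, η, z)` with `η` a non-square is associative for `L_{a,a²}`. -/
theorem Laa2_no_assoc_0ηz_q1mod4 (F : Type*) [Field F] [Fintype F]
    (q : ℕ) (hq : Fintype.card F = q) (h4 : q % 4 = 1)
    (a : F) (ha1 : a ≠ -1) (ha2 : a ≠ 0) (ha3 : a ≠ 1)
    (hs1 : IsSquare a) (hs2 : IsSquare (a + 1)) (hs3 : IsSquare (a ^ 3 - a - 1))
    (hn1 : ¬ IsSquare (a - 1)) (hn2 : ¬ IsSquare (a ^ 2 + 1))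
    (hn3 : ¬ IsSquare (a ^ 2 - a - 1)) (hn4 : ¬ IsSquare (a ^ 2 + a + 1))
    (hn5 : ¬ IsSquare (a ^ 2 + a - 1))
    (L : F → F → F)
    (hL : ∀ x y : F,
      L x y = if IsSquare (y - x) then x + a * (y - x) else x + a ^ 2 * (y - x)) :
    ∀ η : F, ¬ IsSquare η → ∀ z : F, L (L 0 η) z ≠ L 0 (L η z) := by
  intro η hη z h
  have h2 : ringChar F ≠ 2 := by
    intro hc
    have := FiniteField.even_card_of_char_two hc
    omega
  have hm : IsSquare (-1 : F) := by
    rw [FiniteField.isSquare_neg_one_iff]; omega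
  have hm0 : (-1 : F) ≠ 0 := by simp
  have hap : a + 1 ≠ 0 := fun h => ha1 (by linear_combination h)
  have ham : a - 1 ≠ 0 := fun h => ha3 (by linear_combination h)
  have h4' : a ^ 2 + a + 1 ≠ 0 := by intro h; rw [h] at hn4; exact hn4 IsSquare.zero
  have h5' : a ^ 2 + a - 1 ≠ 0 := by intro h; rw [h] at hn5; exact hn5 IsSquare.zero
  have hη0 : η ≠ 0 := by rintro rfl; exact hη IsSquare.zero
  have hL0 : L 0 η = a ^ 2 * η := by rw [hL]; simp [hη]
  rw [hL0, hL (a ^ 2 * η), hL 0, sub_zero, zero_add, zero_add, hL η z] at h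
  by_cases c2 : IsSquare (z - η)
  · simp only [if_pos c2] at h
    by_cases c1 : IsSquare (z - a ^ 2 * η) <;> by_cases c3 : IsSquare (η + a * (z - η)) <;>
      simp only [c1, c3, if_true, if_false] at h
    · have e : z - η = (-1 * a) * η := by
        apply mul_left_cancel₀ (mul_ne_zero ha2 ham)
        linear_combination -h
      rw [e] at c2
      exact aux_H (hm.mul hs1) (mul_ne_zero hm0 ha2) hη c2
    · have e : z = 0 := by
        apply mul_left_cancel₀ (mul_ne_zero (mul_ne_zero ha2 ham) hap)
        linear_combination -h
      have e' : z - a ^ 2 * η = (-1 * (a * a)) * η := by rw [e]; ring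
      rw [e'] at c1
      exact aux_H (hm.mul (hs1.mul hs1)) (mul_ne_zero hm0 (mul_ne_zero ha2 ha2)) hη c1
    · have e : a * (a - 1) * (a ^ 2 + a - 1) * η = 0 := by
        linear_combination -h
      simp [ha2, ham, h5', hη0] at e
    · have e : z - η = (-1 * (a + 1)) * η := by
        apply mul_left_cancel₀ (mul_ne_zero (mul_ne_zero ha2 ha2) ham)
        linear_combination -h
      rw [e] at c2
      exact aux_H (hm.mul hs2) (mul_ne_zero hm0 hap) hη c2
  · simp only [if_neg c2] at h
    by_cases c1 : IsSquare (z - a ^ 2 * η) <;> by_cases c3 : IsSquare (η + a ^ 2 * (z - η)) <;>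
      simp only [c1, c3, if_true, if_false] at h
    · have e : (a + 1) * z = η := by
        apply mul_left_cancel₀ (mul_ne_zero ha2 ham)
        linear_combination -h
      have e3 : (a + 1) * (η + a ^ 2 * (z - η)) = (-1 * (a ^ 3 - a - 1)) * η := by
        linear_combination a ^ 2 * e
      by_cases h0 : a ^ 3 - a - 1 = 0
      · have e1 : z - a ^ 2 * η = (-1 * a) * η := by
          apply mul_left_cancel₀ hap
          linear_combination e - η * h0
        rw [e1] at c1
        exact aux_H (hm.mul hs1) (mul_ne_zero hm0 ha2) hη c1
      · have := hs2.mul c3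
        rw [e3] at this
        exact aux_H (hm.mul hs3) (mul_ne_zero hm0 h0) hη this
    · have e : (a ^ 2 + a + 1) * (z - η) = (-1 * (a + 1)) * η := by
        apply mul_left_cancel₀ (mul_ne_zero ha2 ham)
        linear_combination -h
      have := aux_N h2 hn4 c2
      rw [e] at this
      exact aux_H (hm.mul hs2) (mul_ne_zero hm0 hap) hη this
    · have e : a * (z - η) = -1 * ((a ^ 2 + a - 1) * η) := by
        apply mul_left_cancel₀ (mul_ne_zero ha2 ham)
        linear_combination -h
      have := hm.mul (aux_N h2 hn5 hη)
      rw [← e] at this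
      exact aux_H hs1 ha2 c2 this
    · have e : z = 0 := by
        apply mul_left_cancel₀ (mul_ne_zero (mul_ne_zero (mul_ne_zero ha2 ha2) ham) hap)
        linear_combination -h
      apply c3
      have e' : η + a ^ 2 * (z - η) = (-1 * (a + 1)) * ((a - 1) * η) := by rw [e]; ring
      rw [e']
      exact (hm.mul hs2).mul (aux_N h2 hn1 hη)
end

section
/- Let q ≡ 3 (mod 4) be a prime power and let a ∈ F_q be such that a ≠ −1, 0, 1, the elements a, a+1, a−1, a²+1, a³+a²−1 are squares in F_q, and the elements a²−a+1, a²+a+1, a²+a−1 are non-squares in F_q. Write L := L_{a,a²}. Then no triple of the form (0, 1, z) is associative: for every z ∈ F_q, L(L(0,1), z) ≠ L(0, L(1,z)). -/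
open scoped Classical

/-- Case `q ≡ 3 (mod 4)`: no triple `(0, 1, z)` is associative for `L_{a,a²}`. -/
theorem Laa2_no_assoc_01z_q3mod4 (F : Type*) [Field F] [Fintype F]
    (q : ℕ) (hq : Fintype.card F = q) (h4 : q % 4 = 3)
    (a : F) (ha1 : a ≠ -1) (ha2 : a ≠ 0) (ha3 : a ≠ 1)
    (hs1 : IsSquare a) (hs2 : IsSquare (a + 1)) (hs3 : IsSquare (a - 1))
    (hs4 : IsSquare (a ^ 2 + 1)) (hs5 : IsSquare (a ^ 3 + a ^ 2 - 1))
    (hn1 : ¬ IsSquare (a ^ 2 - a + 1)) (hn2 : ¬ IsSquare (a ^ 2 + a + 1))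
    (hn3 : ¬ IsSquare (a ^ 2 + a - 1))
    (L : F → F → F)
    (hL : ∀ x y : F,
      L x y = if IsSquare (y - x) then x + a * (y - x) else x + a ^ 2 * (y - x)) :
    ∀ z : F, L (L 0 1) z ≠ L 0 (L 1 z) := by
  have hm : ¬ IsSquare (-1 : F) := by
    rw [FiniteField.isSquare_neg_one_iff, hq]
    simp [h4]
  have hchar : ringChar F ≠ 2 := by
    intro h
    have := FiniteField.even_card_of_char_two h
    omega
  -- the negative of a non-square is a square
  have hneg : ∀ x : F, ¬ IsSquare x → IsSquare (-x) := by
    intro x hx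
    have hx0 : x ≠ 0 := by
      rintro rfl
      exact hx (IsSquare.zero)
    have e1 := (quadraticChar_neg_one_iff_not_isSquare (F := F)).2 hx
    have e2 := (quadraticChar_neg_one_iff_not_isSquare (F := F)).2 hm
    rw [← quadraticChar_one_iff_isSquare (neg_ne_zero.2 hx0), neg_eq_neg_one_mul, map_mul, e1, e2]
    norm_num
  have key : ∀ u s t : F, IsSquare u → IsSquare s → IsSquare t → t ≠ 0 → u * s = -t → False := by
    intro u s t hu hs ht ht0 h
    apply hm
    have : (-1 : F) = u * s / t := by
      rw [h]; field_simp
    rw [this]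
    exact (hu.mul hs).div ht
  have hP := hneg _ hn2
  have hQ := hneg _ hn1
  have hQ0 : -(a ^ 2 - a + 1) ≠ 0 := by
    intro h
    apply hn1
    rw [neg_eq_zero.1 h]
    exact IsSquare.zero
  have hp : a + 1 ≠ 0 := fun h => ha1 (eq_neg_of_add_eq_zero_left h)
  have hd : a - 1 ≠ 0 := sub_ne_zero.2 ha3
  have hi0 : a ^ 2 + 1 ≠ 0 := by
    intro h
    apply hm
    rw [← eq_neg_of_add_eq_zero_left h]
    exact IsSquare.sq a
  have hsq1 : IsSquare (1 : F) := IsSquare.one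
  intro z hz
  have h01 : L 0 1 = a := by
    rw [hL]; simp
  rw [h01, hL a z, hL 0, hL 1 z] at hz
  simp only [sub_zero, zero_add] at hz
  have c1 : a * (a - 1) ≠ 0 := mul_ne_zero ha2 hd
  by_cases hi : IsSquare (z - a) <;> by_cases hj : IsSquare (z - 1)
  · simp only [hi, hj, if_true] at hz
    split_ifs at hz with hk
    · have e : z = 0 := mul_left_cancel₀ c1 (by linear_combination -hz)
      exact key (z - a) 1 a hi hsq1 hs1 ha2 (by rw [e]; ring)
    · have e : z * (a + 1) = a - 1 := mul_left_cancel₀ c1 (by linear_combination -hz)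
      exact key (z - a) (a + 1) (a ^ 2 + 1) hi hs2 hs4 hi0 (by linear_combination e)
  · simp only [hi, hj, if_true, if_false] at hz
    split_ifs at hz with hk
    · have e : z * (a + 1) = a := mul_left_cancel₀ c1 (by linear_combination -hz)
      exact key (z - a) (a + 1) (a ^ 2) hi hs2 (IsSquare.sq a) (pow_ne_zero 2 ha2)
        (by linear_combination e)
    · have e : z * (a ^ 2 + a + 1) = a ^ 2 + a - 1 :=
        mul_left_cancel₀ c1 (by linear_combination -hz)
      exact key (z - a) (-(a ^ 2 + a + 1)) ((a + 1) * -(a ^ 2 - a + 1)) hi hP (hs2.mul hQ)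
        (mul_ne_zero hp hQ0) (by linear_combination -e)
  · simp only [hi, hj, if_true, if_false] at hz
    split_ifs at hz with hk
    · exact mul_ne_zero ha2 c1 (by linear_combination -hz)
    · have e : z * a = -1 := mul_left_cancel₀ c1 (by linear_combination -hz)
      exact key (z - 1) a (a + 1) hj hs1 hs2 hp (by linear_combination e)
  · simp only [hi, hj, if_false] at hz
    split_ifs at hz with hk
    · have e : z = 0 := mul_left_cancel₀ (mul_ne_zero ha2 c1) (by linear_combination -hz)
      exact key _ 1 ((a - 1) * (a + 1)) hk hsq1 (hs3.mul hs2) (mul_ne_zero hd hp)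
        (by rw [e]; ring)
    · have e : z * a = a - 1 :=
        mul_left_cancel₀ (mul_ne_zero c1 hp) (by linear_combination -hz)
      exact key (-(z - a)) a (-(a ^ 2 - a + 1)) (hneg _ hi) hs1 hQ hQ0
        (by linear_combination -e)
end

section
/- Let q ≡ 3 (mod 4) be a prime power and let a ∈ F_q be such that a ≠ −1, 0, 1, the elements a, a+1, a−1, a²+1, a³+a²−1 are squares in F_q, and the elements a²−a+1, a²+a+1, a²+a−1 are non-squares in F_q. Write L := L_{a,a²}. Then for every non-square η ∈ F_q, no triple of the form (0, η, z) is associative: for every z ∈ F_q, L(L(0,η), z) ≠ L(0, L(η,z)). -/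
open scoped Classical

/-- Case `q ≡ 3 (mod 4)`: no triple `(0, η, z)` with `η` a non-square is associative for `L_{a,a²}`. -/
theorem Laa2_no_assoc_0ηz_q3mod4 (F : Type*) [Field F] [Fintype F]
    (q : ℕ) (hq : Fintype.card F = q) (h4 : q % 4 = 3)
    (a : F) (ha1 : a ≠ -1) (ha2 : a ≠ 0) (ha3 : a ≠ 1)
    (hs1 : IsSquare a) (hs2 : IsSquare (a + 1)) (hs3 : IsSquare (a - 1))
    (hs4 : IsSquare (a ^ 2 + 1)) (hs5 : IsSquare (a ^ 3 + a ^ 2 - 1))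
    (hn1 : ¬ IsSquare (a ^ 2 - a + 1)) (hn2 : ¬ IsSquare (a ^ 2 + a + 1))
    (hn3 : ¬ IsSquare (a ^ 2 + a - 1))
    (L : F → F → F)
    (hL : ∀ x y : F,
      L x y = if IsSquare (y - x) then x + a * (y - x) else x + a ^ 2 * (y - x)) :
    ∀ η : F, ¬ IsSquare η → ∀ z : F, L (L 0 η) z ≠ L 0 (L η z) := by
  intro η hη z h
  have hm : ¬ IsSquare (-1 : F) := by
    rw [FiniteField.isSquare_neg_one_iff]; omega
  have hη0 : η ≠ 0 := by rintro rfl; exact hη IsSquare.zero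
  have hsη : IsSquare (-η) := by
    have h2 : ringChar F ≠ 2 := by
      intro h2
      exact hm (FiniteField.isSquare_of_char_two h2 _)
    have e1 := quadraticChar_neg_one_iff_not_isSquare.mpr hm
    have e2 := quadraticChar_neg_one_iff_not_isSquare.mpr hη
    rw [← quadraticChar_one_iff_isSquare (neg_ne_zero.mpr hη0),
      ← neg_one_mul, map_mul, e1, e2]
    norm_num
  obtain ⟨s, hs⟩ : ∃ s, s = -η := ⟨_, rfl⟩
  rw [← hs] at hsη
  have hs0 : s ≠ 0 := by rw [hs]; exact neg_ne_zero.mpr hη0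
  have hηs : η = -s := by rw [hs, neg_neg]
  have sc : ∀ x, IsSquare (s * x) ↔ IsSquare x := by
    intro x
    constructor
    · intro hx
      have := hx.div hsη
      rwa [mul_div_cancel_left₀ _ hs0] at this
    · exact fun hx => hsη.mul hx
  have hLs : ∀ x y, L (s * x) (s * y) = s * L x y := by
    intro x y
    rw [hL, hL, ← mul_sub]
    simp only [sc]
    split_ifs <;> ring
  obtain ⟨t, rfl⟩ : ∃ t, z = s * t := ⟨z / s, by field_simp⟩
  have h0 : (0 : F) = s * 0 := by ring
  have h1 : η = s * (-1) := by rw [hηs]; ring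
  rw [h1, h0, hLs, hLs, hLs, hLs] at h
  have h := mul_left_cancel₀ hs0 h
  have hA : L 0 (-1) = -a ^ 2 := by
    rw [hL, if_neg (by simpa using hm)]; ring
  have hp : a + 1 ≠ 0 := fun h => ha1 (eq_neg_of_add_eq_zero_left h)
  have hd : a - 1 ≠ 0 := sub_ne_zero.mpr ha3
  have hc : a ^ 2 + a + 1 ≠ 0 := by intro h; rw [h] at hn2; exact hn2 IsSquare.zero
  have hb : a ^ 2 + a - 1 ≠ 0 := by intro h; rw [h] at hn3; exact hn3 IsSquare.zero
  rw [hA, hL (-a ^ 2), hL 0, hL (-1)] at h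
  simp only [sub_neg_eq_add, sub_zero, zero_add] at h
  by_cases c1 : IsSquare (t + a ^ 2) <;> by_cases c2 : IsSquare (t + 1) <;>
    simp only [c1, c2, if_true, if_false] at h <;> split_ifs at h with c3
  · have e : t = a - 1 := by
      apply mul_left_cancel₀ (mul_ne_zero ha2 hd); linear_combination -h
    apply hn3
    rw [e] at c1
    convert c1 using 1; ring
  · have e : t = 0 := by
      apply mul_left_cancel₀ (mul_ne_zero ha2 (mul_ne_zero hd hp)); linear_combination -h
    apply c3
    rw [e]
    convert hs3 using 1; ring
  · have e : t + 1 = a / (a + 1) := by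
      rw [eq_div_iff hp]
      apply mul_left_cancel₀ (mul_ne_zero ha2 hd); linear_combination -h
    exact c2 (e ▸ hs1.div hs2)
  · have e : (t + a ^ 2) * (a ^ 2 + a + 1) = a * a * (a * (a + 1)) := by
      apply mul_left_cancel₀ (mul_ne_zero ha2 hd); linear_combination -h
    have hz : t + a ^ 2 ≠ 0 := by
      intro hz
      rw [hz, zero_mul] at e
      exact mul_ne_zero (mul_ne_zero ha2 ha2) (mul_ne_zero ha2 hp) e.symm
    apply hn2
    have e' : a ^ 2 + a + 1 = a * a * (a * (a + 1)) / (t + a ^ 2) := by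
      rw [eq_div_iff hz, ← e]; ring
    rw [e']
    exact ((hs1.mul hs1).mul (hs1.mul hs2)).div c1
  · apply mul_ne_zero ha2 (mul_ne_zero hd hb)
    linear_combination h
  · have e : t = a := by
      apply mul_left_cancel₀ (mul_ne_zero (mul_ne_zero ha2 ha2) hd); linear_combination -h
    apply c1
    rw [e]
    have e2 : a + a ^ 2 = a * (a + 1) := by ring
    exact e2 ▸ hs1.mul hs2
  · have e : t + a ^ 2 = (a ^ 3 + a ^ 2 - 1) / a := by
      rw [eq_div_iff ha2]
      apply mul_left_cancel₀ (mul_ne_zero ha2 hd); linear_combination -h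
    exact c1 (e ▸ hs5.div hs1)
  · have e : t = 0 := by
      apply mul_left_cancel₀ (mul_ne_zero (mul_ne_zero ha2 ha2) (mul_ne_zero hd hp))
      linear_combination -h
    apply c2
    rw [e, zero_add]
    exact IsSquare.one
end

section
/- Let q be an odd prime power, a, b ∈ F_q, and suppose (t, u, v) ∈ F_q³ is an associative triple of L := L_{a,b}, i.e. L(L(t,u), v) = L(t, L(u,v)), where u − t is a non-zero square in F_q. Let z = (v − t)/(u − t). Then (0, 1, z) is an associative triple of L: L(L(0,1), z) = L(0, L(1,z)). -/
open scoped Classical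

/-- An associative triple `(t,u,v)` of `L_{a,b}` with `u - t` a non-zero square
reduces to the associative triple `(0, 1, (v-t)/(u-t))`. -/
theorem assoc_triple_reduction (F : Type*) [Field F] [Fintype F]
    (q : ℕ) (hq : Fintype.card F = q) (hodd : Odd q)
    (a b : F) (L : F → F → F)
    (hL : ∀ x y : F,
      L x y = if IsSquare (y - x) then x + a * (y - x) else x + b * (y - x))
    (t u v : F) (hsq : IsSquare (u - t)) (hne : u - t ≠ 0)
    (hassoc : L (L t u) v = L t (L u v)) :
    L (L 0 1) ((v - t) / (u - t)) = L 0 (L 1 ((v - t) / (u - t))) := by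
  obtain ⟨s, hs⟩ : ∃ s, s = u - t := ⟨_, rfl⟩
  rw [← hs] at hsq hne ⊢
  have key : ∀ x y : F, L (t + s * x) (t + s * y) = t + s * L x y := by
    intro x y
    have e : t + s * y - (t + s * x) = s * (y - x) := by ring
    have h : IsSquare (s * (y - x)) ↔ IsSquare (y - x) := by
      constructor
      · intro h
        have h2 := h.div hsq
        rwa [mul_div_cancel_left₀ _ hne] at h2
      · intro h
        exact hsq.mul h
    rw [hL, hL x y, e]
    by_cases hc : IsSquare (y - x)
    · rw [if_pos (h.2 hc), if_pos hc]; ring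
    · rw [if_neg (fun k => hc (h.1 k)), if_neg hc]; ring
  have ht : t = t + s * 0 := by ring
  have hu : u = t + s * 1 := by rw [hs]; ring
  have hv : v = t + s * ((v - t) / s) := by field_simp; ring
  generalize (v - t) / s = z at hv ⊢
  have h1 : L (L t u) v = t + s * L (L 0 1) z := by
    rw [← key, ← key, ← ht, ← hu, ← hv]
  have h2 : L t (L u v) = t + s * L 0 (L 1 z) := by
    rw [← key, ← key, ← ht, ← hu, ← hv]
  rw [h1, h2] at hassoc
  exact mul_left_cancel₀ hne (add_left_cancel hassoc)
end
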